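/- Over k = ℝ, the reduced Betti numbers of the complement of an arrangement X of linear subspaces in ℝ^n satisfy dim_ℚ H̃_i(ℝ^n \ X; ℚ) = Σ_p dim_ℚ H̃_{h(p)-i-2}(K(>p); ℚ), where the sum runs over the intersection poset P(X), h(p) is the codimension of the subspace corresponding to p, and K(>p) is the order complex of {q ∈ P(X) : q > p}. -/

import Mathlib

/-- Chains of `m` elements of a preorder `P`: strictly increasing `m`-tuples. These are the
`(m-1)`-simplices of the order complex `K(P)`; for `m = 0` there is exactly one (empty) chain. -/
@[reducible] def pchains (P : Type*) [Preorder P] (m : ℕ) : Type _ :=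
  {f : Fin m → P // StrictMono f}

/-- The boundary map of the augmented simplicial chain complex of the order complex of `P`
with coefficients in `M`: the alternating sum over deletions of a vertex.  In degree `0`
this is the augmentation onto `pchains P 0 →₀ M ≃ M`. -/
noncomputable def simpBdry (A : Type*) [CommRing A] (M : Type*) [AddCommGroup M] [Module A M]
    (P : Type*) [Preorder P] (m : ℕ) :
    (pchains P (m + 1) →₀ M) →ₗ[A] (pchains P m →₀ M) :=
  Finsupp.lsum ℕ fun c =>
    ∑ i : Fin (m + 1), ((-1 : A) ^ (i : ℕ)) •
      (Finsupp.lsingle (⟨c.1 ∘ i.succAbove, c.2.comp (Fin.strictMono_succAbove i)⟩ : pchains P m))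

/-- Cycles of the augmented simplicial chain complex (everything in lowest degree). -/
noncomputable def simpCycles (A : Type*) [CommRing A] (M : Type*) [AddCommGroup M] [Module A M]
    (P : Type*) [Preorder P] : (m : ℕ) → Submodule A (pchains P m →₀ M)
  | 0 => ⊤
  | (m + 1) => LinearMap.ker (simpBdry A M P m)

/-- `simpHomology A M P m` is the reduced simplicial homology `H̃_{m-1}(K(P); M)` of the order
complex of `P` with coefficients in the `A`-module `M`, computed from the augmented chain
complex; with this convention `H̃_{-1}(∅; M) = M` (the case `m = 0`, `P = ∅`). -/
@[reducible] noncomputable def simpHomology (A : Type*) [CommRing A] (M : Type*) [AddCommGroup M] [Module A M]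
    (P : Type*) [Preorder P] (m : ℕ) : Type _ :=
  ↥(simpCycles A M P m) ⧸
    (Submodule.comap (simpCycles A M P m).subtype (LinearMap.range (simpBdry A M P m)))

open CategoryTheory

/-- The singular chain complex of a topological space with rational coefficients: the
alternating face map complex of the levelwise free `ℚ`-module on the singular simplicial
set. -/
noncomputable def singChainsQ (X : TopCat) : ChainComplex (ModuleCat ℚ) ℕ :=
  (AlgebraicTopology.alternatingFaceMapComplex (ModuleCat ℚ)).obj
    (((SimplicialObject.whiskering _ _).obj (ModuleCat.free ℚ)).obj (TopCat.toSSet.obj X))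

/-- Singular homology with rational coefficients. -/
noncomputable def singHomQ (X : TopCat) (i : ℕ) : ModuleCat ℚ :=
  (singChainsQ X).homology i

/-! The flags of `P` span a complex, graded by length and codimension, that maps to the cochains of
`E` relative to `E \ X`: starting from local generators of the groups `H^{h(p)}(E, E \ S p)`, which
have rank one, the values on longer flags are chosen inductively. Mayer–Vietoris over the
lower sets of `P` shows that this map is a quasi-isomorphism. Splitting the flag chains by the
smallest element `p` of a flag gives `⊕_p H̃(K(>p))`. Since `E` is contractible, relative cocycles
correspond to cocycles of the complement in one degree less, and over a field cohomology is dual to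
homology. -/

namespace GoreskyMacPherson

/-! ### Barycentric subdivision of ordered chains -/

theorem linearMap_ext_single_one {R ι M : Type*} [CommRing R] [AddCommGroup M] [Module R M]
    {f g : (ι →₀ R) →ₗ[R] M} (h : ∀ a, f (Finsupp.single a 1) = g (Finsupp.single a 1)) :
    f = g :=
  Finsupp.lhom_ext' fun a => LinearMap.ext_ring (h a)

theorem map_mem_of_mem_supported {R ι M : Type*} [CommRing R] [AddCommGroup M] [Module R M]
    {s : Set ι} {f : (ι →₀ R) →ₗ[R] M} {N : Submodule R M}
    (h : ∀ a ∈ s, f (Finsupp.single a 1) ∈ N) {c : ι →₀ R} (hc : c ∈ Finsupp.supported R R s) :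
    f c ∈ N := by
  rw [Finsupp.supported_eq_span_single] at hc
  refine (Submodule.span_le (p := N.comap f)).2 ?_ hc
  rintro _ ⟨a, ha, rfl⟩
  exact h a ha

/-- The augmented ordered chains of the full simplex on the vertex set `K`. The index counts
vertices, so that `TupleChain R K m` sits in simplicial degree `m - 1`. -/
abbrev TupleChain (R K : Type*) [CommRing R] (m : ℕ) : Type _ := (Fin m → K) →₀ R

namespace TupleChain

variable {R K K' : Type*} [CommRing R]

/-- The alternating sum over deletions of an entry. -/
noncomputable def bdry (m : ℕ) : TupleChain R K (m + 1) →ₗ[R] TupleChain R K m :=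
  Finsupp.linearCombination R fun v =>
    ∑ i : Fin (m + 1), (-1 : R) ^ (i : ℕ) • Finsupp.single (v ∘ i.succAbove) 1

/-- The join with an apex `x`, inserted as the first entry. -/
noncomputable def cone (x : K) (m : ℕ) : TupleChain R K m →ₗ[R] TupleChain R K (m + 1) :=
  Finsupp.linearCombination R fun v => Finsupp.single (Fin.cons x v : Fin (m + 1) → K) 1

/-- The chain map induced by a map of vertex sets. -/
noncomputable def map (φ : K → K') (m : ℕ) : TupleChain R K m →ₗ[R] TupleChain R K' m :=
  Finsupp.linearCombination R fun v => Finsupp.single (φ ∘ v) 1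

theorem bdry_single (m : ℕ) (v : Fin (m + 1) → K) :
    bdry m (Finsupp.single v (1 : R)) =
      ∑ i : Fin (m + 1), (-1 : R) ^ (i : ℕ) • Finsupp.single (v ∘ i.succAbove) 1 := by
  simp [bdry]

theorem cone_single (x : K) (m : ℕ) (v : Fin m → K) :
    cone x m (Finsupp.single v (1 : R)) = Finsupp.single (Fin.cons x v : Fin (m + 1) → K) 1 := by
  simp [cone]

theorem map_single (φ : K → K') (m : ℕ) (v : Fin m → K) :
    map φ m (Finsupp.single v (1 : R)) = Finsupp.single (φ ∘ v) 1 := by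
  simp [map]

theorem cons_comp_succAbove_succ (x : K) (m : ℕ) (v : Fin (m + 1) → K) (i : Fin (m + 1)) :
    (Fin.cons x v : Fin (m + 2) → K) ∘ i.succ.succAbove =
      (Fin.cons x (v ∘ i.succAbove) : Fin (m + 1) → K) := by
  funext j
  cases j using Fin.cases <;> simp

theorem cons_comp_succAbove_zero (x : K) (m : ℕ) (v : Fin m → K) :
    (Fin.cons x v : Fin (m + 1) → K) ∘ (0 : Fin (m + 1)).succAbove = v := by
  funext j
  simp

theorem bdry_cone (x : K) (m : ℕ) (c : TupleChain R K (m + 1)) :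
    bdry (m + 1) (cone x (m + 1) c) = c - cone x m (bdry m c) := by
  suffices bdry (R := R) (m + 1) ∘ₗ cone x (m + 1) = LinearMap.id - cone x m ∘ₗ bdry m from
    LinearMap.congr_fun this c
  refine linearMap_ext_single_one fun v => ?_
  simp only [LinearMap.comp_apply, LinearMap.sub_apply, LinearMap.id_apply, cone_single,
    bdry_single, map_sum, map_smul]
  rw [Fin.sum_univ_succ, cons_comp_succAbove_zero]
  simp only [cons_comp_succAbove_succ, Fin.val_zero, pow_zero, one_smul, Fin.val_succ, pow_succ,
    mul_neg, mul_one, neg_smul, Finset.sum_neg_distrib, sub_eq_add_neg]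

theorem bdry_cone_zero (x : K) (c : TupleChain R K 0) : bdry 0 (cone x 0 c) = c := by
  suffices bdry (R := R) 0 ∘ₗ cone x 0 = LinearMap.id from LinearMap.congr_fun this c
  refine linearMap_ext_single_one fun v => ?_
  simp [cone_single, bdry_single]

theorem bdry_bdry (m : ℕ) (c : TupleChain R K (m + 2)) : bdry m (bdry (m + 1) c) = 0 := by
  suffices bdry (R := R) (K := K) m ∘ₗ bdry (m + 1) = 0 from LinearMap.congr_fun this c
  clear c
  -- Every tuple is the cone over its tail, so `∂² = 0` is inherited from shorter tuples.
  induction m with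
  | zero =>
    refine linearMap_ext_single_one fun v => ?_
    rw [← Fin.cons_self_tail v, ← cone_single, LinearMap.comp_apply, bdry_cone, map_sub,
      bdry_cone_zero, sub_self, LinearMap.zero_apply]
  | succ m ih =>
    refine linearMap_ext_single_one fun v => ?_
    have hbdry := LinearMap.congr_fun ih (Finsupp.single (Fin.tail v) 1)
    rw [LinearMap.comp_apply, LinearMap.zero_apply] at hbdry
    rw [← Fin.cons_self_tail v, ← cone_single, LinearMap.comp_apply, bdry_cone, map_sub,
      bdry_cone, hbdry, map_zero, sub_zero, sub_self, LinearMap.zero_apply]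

/-- The universal form of `∂² = 0`, from which it is deduced for other complexes. -/
theorem sum_succAbove_comp_succAbove_eq_zero {M : Type*} [AddCommGroup M] [Module R M] (m : ℕ)
    (F : (Fin m → Fin (m + 2)) → M) :
    ∑ i : Fin (m + 2), (-1 : R) ^ (i : ℕ) • ∑ j : Fin (m + 1), (-1 : R) ^ (j : ℕ) •
      F (i.succAbove ∘ j.succAbove) = 0 := by
  have h := congrArg (Finsupp.linearCombination R F)
    (bdry_bdry m (Finsupp.single (id : Fin (m + 2) → Fin (m + 2)) 1))
  simpa only [bdry_single, map_sum, map_smul, Finsupp.linearCombination_single, one_smul,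
    map_zero, Function.id_comp] using h

theorem map_bdry (φ : K → K') (m : ℕ) (c : TupleChain R K (m + 1)) :
    map φ m (bdry m c) = bdry m (map φ (m + 1) c) := by
  suffices map (R := R) φ m ∘ₗ bdry m = bdry m ∘ₗ map φ (m + 1) from LinearMap.congr_fun this c
  refine linearMap_ext_single_one fun v => ?_
  simp only [LinearMap.comp_apply, bdry_single, map_single, map_sum, map_smul,
    Function.comp_assoc]

theorem map_cone (φ : K → K') (x : K) (m : ℕ) (c : TupleChain R K m) :
    map φ (m + 1) (cone x m c) = cone (φ x) m (map φ m c) := by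
  suffices map (R := R) φ (m + 1) ∘ₗ cone x m = cone (φ x) m ∘ₗ map φ m from
    LinearMap.congr_fun this c
  refine linearMap_ext_single_one fun v => ?_
  simp only [LinearMap.comp_apply, cone_single, map_single, Fin.comp_cons]

/-- A choice of a barycenter for every nonempty tuple of vertices. -/
abbrev Barycenters (K : Type*) : Type _ := ∀ m : ℕ, (Fin (m + 1) → K) → K

/-- Barycentric subdivision: cone off the subdivided boundary from the barycenter. -/
noncomputable def sd (b : Barycenters K) : ∀ m : ℕ, TupleChain R K m →ₗ[R] TupleChain R K m
  | 0 => LinearMap.id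
  | m + 1 => Finsupp.linearCombination R fun v =>
      cone (b m v) m (sd b m (bdry m (Finsupp.single v 1)))

/-- The chain homotopy from `sd` to the identity. -/
noncomputable def sdHomotopy (b : Barycenters K) :
    ∀ m : ℕ, TupleChain R K m →ₗ[R] TupleChain R K (m + 1)
  | 0 => 0
  | m + 1 => Finsupp.linearCombination R fun v =>
      cone (b m v) (m + 1)
        (Finsupp.single v 1 - sdHomotopy b m (bdry m (Finsupp.single v 1)))

/-- The chain homotopy from `sd ^ k` to the identity. -/
noncomputable def sdPowHomotopy (b : Barycenters K) (k m : ℕ) :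
    TupleChain R K m →ₗ[R] TupleChain R K (m + 1) :=
  ∑ i ∈ Finset.range k, sdHomotopy b m ∘ₗ sd b m ^ i

section Subdivision

variable (b : Barycenters K)

theorem sd_single (m : ℕ) (v : Fin (m + 1) → K) :
    sd b (m + 1) (Finsupp.single v (1 : R)) =
      cone (b m v) m (sd b m (bdry m (Finsupp.single v 1))) := by
  simp [sd]

theorem sdHomotopy_single (m : ℕ) (v : Fin (m + 1) → K) :
    sdHomotopy b (m + 1) (Finsupp.single v (1 : R)) = cone (b m v) (m + 1)
      (Finsupp.single v 1 - sdHomotopy b m (bdry m (Finsupp.single v 1))) := by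
  simp [sdHomotopy]

theorem bdry_sd (m : ℕ) (c : TupleChain R K (m + 1)) :
    bdry m (sd b (m + 1) c) = sd b m (bdry m c) := by
  suffices bdry (R := R) m ∘ₗ sd b (m + 1) = sd b m ∘ₗ bdry m from LinearMap.congr_fun this c
  clear c
  induction m with
  | zero =>
    refine linearMap_ext_single_one fun v => ?_
    rw [LinearMap.comp_apply, LinearMap.comp_apply, sd_single, bdry_cone_zero]
  | succ m ih =>
    refine linearMap_ext_single_one fun v => ?_
    have hsd := LinearMap.congr_fun ih (bdry (m + 1) (Finsupp.single v 1))
    rw [LinearMap.comp_apply, LinearMap.comp_apply, bdry_bdry, map_zero] at hsd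
    rw [LinearMap.comp_apply, LinearMap.comp_apply, sd_single, bdry_cone, hsd, map_zero, sub_zero]

theorem bdry_sdHomotopy (m : ℕ) (c : TupleChain R K (m + 1)) :
    bdry (m + 1) (sdHomotopy b (m + 1) c) + sdHomotopy b m (bdry m c) = c - sd b (m + 1) c := by
  suffices bdry (R := R) (m + 1) ∘ₗ sdHomotopy b (m + 1) + sdHomotopy b m ∘ₗ bdry m =
      LinearMap.id - sd b (m + 1) from LinearMap.congr_fun this c
  clear c
  induction m with
  | zero =>
    refine linearMap_ext_single_one fun v => ?_
    simp [sdHomotopy, sd, bdry_cone]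
  | succ m ih =>
    refine linearMap_ext_single_one fun v => ?_
    have hhtpy := LinearMap.congr_fun ih (bdry (m + 1) (Finsupp.single v 1))
    simp only [LinearMap.comp_apply, LinearMap.add_apply, LinearMap.sub_apply,
      LinearMap.id_apply, bdry_bdry, map_zero, add_zero] at hhtpy
    simp only [LinearMap.comp_apply, LinearMap.add_apply, LinearMap.sub_apply,
      LinearMap.id_apply, sdHomotopy_single, sd_single, bdry_cone, map_sub, hhtpy]
    abel

theorem bdry_sd_pow (m k : ℕ) (c : TupleChain R K (m + 1)) :
    bdry m ((sd b (m + 1) ^ k) c) = (sd b m ^ k) (bdry m c) := by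
  induction k with
  | zero => rfl
  | succ k ih => rw [pow_succ', pow_succ', Module.End.mul_apply, Module.End.mul_apply, bdry_sd, ih]

theorem sdPowHomotopy_succ (k m : ℕ) :
    sdPowHomotopy (R := R) b (k + 1) m = sdPowHomotopy b k m + sdHomotopy b m ∘ₗ sd b m ^ k :=
  Finset.sum_range_succ ..

theorem bdry_sdPowHomotopy (k m : ℕ) (c : TupleChain R K (m + 1)) :
    bdry (m + 1) (sdPowHomotopy b k (m + 1) c) + sdPowHomotopy b k m (bdry m c) =
      c - (sd b (m + 1) ^ k) c := by
  induction k with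
  | zero => simp [sdPowHomotopy]
  | succ k ih =>
    have hstep := bdry_sdHomotopy b m ((sd b (m + 1) ^ k) c)
    rw [bdry_sd_pow] at hstep
    rw [sdPowHomotopy_succ, sdPowHomotopy_succ, LinearMap.add_apply, LinearMap.add_apply, map_add,
      LinearMap.comp_apply, LinearMap.comp_apply, pow_succ', Module.End.mul_apply,
      add_add_add_comm, ih, hstep]
    abel

end Subdivision

section Naturality

variable {b : Barycenters K} {b' : Barycenters K'} {φ : K → K'}

theorem map_sd (hφ : ∀ m v, φ (b m v) = b' m (φ ∘ v)) (m : ℕ) (c : TupleChain R K m) :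
    map φ m (sd b m c) = sd b' m (map φ m c) := by
  suffices map (R := R) φ m ∘ₗ sd b m = sd b' m ∘ₗ map φ m from LinearMap.congr_fun this c
  clear c
  induction m with
  | zero => rfl
  | succ m ih =>
    refine linearMap_ext_single_one fun v => ?_
    have hsd := LinearMap.congr_fun ih (bdry m (Finsupp.single v 1))
    simp only [LinearMap.comp_apply] at hsd ⊢
    rw [sd_single, map_cone, hsd, map_bdry, map_single, sd_single, hφ]

theorem map_sdHomotopy (hφ : ∀ m v, φ (b m v) = b' m (φ ∘ v)) (m : ℕ) (c : TupleChain R K m) :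
    map φ (m + 1) (sdHomotopy b m c) = sdHomotopy b' m (map φ m c) := by
  suffices map (R := R) φ (m + 1) ∘ₗ sdHomotopy b m = sdHomotopy b' m ∘ₗ map φ m from
    LinearMap.congr_fun this c
  clear c
  induction m with
  | zero => simp [sdHomotopy]
  | succ m ih =>
    refine linearMap_ext_single_one fun v => ?_
    have hhtpy := LinearMap.congr_fun ih (bdry m (Finsupp.single v 1))
    simp only [LinearMap.comp_apply] at hhtpy ⊢
    rw [sdHomotopy_single, map_cone, map_sub, hhtpy, map_bdry, map_single, sdHomotopy_single, hφ]

theorem map_sd_pow (hφ : ∀ m v, φ (b m v) = b' m (φ ∘ v)) (k m : ℕ) (c : TupleChain R K m) :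
    map φ m ((sd b m ^ k) c) = (sd b' m ^ k) (map φ m c) := by
  induction k with
  | zero => rfl
  | succ k ih =>
    rw [pow_succ', pow_succ', Module.End.mul_apply, Module.End.mul_apply, map_sd hφ, ih]

theorem map_sdPowHomotopy (hφ : ∀ m v, φ (b m v) = b' m (φ ∘ v)) (k m : ℕ)
    (c : TupleChain R K m) :
    map φ (m + 1) (sdPowHomotopy b k m c) = sdPowHomotopy b' k m (map φ m c) := by
  simp only [sdPowHomotopy, LinearMap.sum_apply, LinearMap.comp_apply, map_sum,
    map_sdHomotopy hφ, map_sd_pow hφ]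

end Naturality

end TupleChain

/-! ### Affine simplices -/

section ConvexEstimates

variable {V : Type*} [SeminormedAddCommGroup V] [NormedSpace ℝ V]

theorem dist_smul_sum_le {m : ℕ} {v : Fin (m + 1) → V} {i : Fin (m + 1)} {ρ : ℝ}
    (h : ∀ j, dist (v j) (v i) ≤ ρ) :
    dist ((1 / (m + 1) : ℝ) • ∑ j, v j) (v i) ≤ m / (m + 1) * ρ := by
  have hm : (0 : ℝ) < m + 1 := by positivity
  have hdiff : (1 / (m + 1) : ℝ) • ∑ j, v j - v i =
      (1 / (m + 1) : ℝ) • ∑ j ∈ Finset.univ.erase i, (v j - v i) := by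
    have hsum : ∑ j, (v j - v i) = ∑ j, v j - (m + 1 : ℝ) • v i := by
      simp [Finset.sum_sub_distrib, ← Nat.cast_smul_eq_nsmul ℝ]
    classical
    rw [Finset.sum_erase (f := fun j => v j - v i) _ (sub_self (v i)), hsum, smul_sub, smul_smul,
      one_div, inv_mul_cancel₀ hm.ne', one_smul]
  rw [dist_eq_norm, hdiff, norm_smul, Real.norm_of_nonneg (by positivity)]
  calc 1 / (m + 1 : ℝ) * ‖∑ j ∈ Finset.univ.erase i, (v j - v i)‖
      ≤ 1 / (m + 1 : ℝ) * ∑ _j ∈ Finset.univ.erase i, ρ := by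
        gcongr
        exact norm_sum_le_of_le _ fun j _ => (dist_eq_norm (v j) (v i)).symm.trans_le (h j)
    _ = m / (m + 1) * ρ := by
        rw [Finset.sum_const, Finset.card_erase_of_mem (Finset.mem_univ i), Finset.card_univ,
          Fintype.card_fin, Nat.add_sub_cancel, nsmul_eq_mul]
        ring

end ConvexEstimates

/-- The standard topological `N`-simplex. -/
abbrev TopSimplex (N : ℕ) : Type := stdSimplex ℝ (Fin (N + 1))

namespace TopSimplex

theorem ext_coord {N : ℕ} {s t : TopSimplex N} (h : ∀ x, s x = t x) : s = t :=
  Subtype.ext (funext h)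

theorem continuous_coord {N : ℕ} (j : Fin (N + 1)) : Continuous fun t : TopSimplex N => t j :=
  (continuous_apply j).comp continuous_subtype_val

/-- The convex combination of the points `v j` with the barycentric coordinates of `t` as weights;
as a function of `t`, the affine simplex with vertices `v`. -/
noncomputable def comb {m N : ℕ} (v : Fin (m + 1) → TopSimplex N) :
    C(TopSimplex m, TopSimplex N) where
  toFun t := ⟨∑ j, t j • (v j : Fin (N + 1) → ℝ), (convex_stdSimplex ℝ _).sum_mem
    (fun j _ => stdSimplex.zero_le t j) (stdSimplex.sum_eq_one t) fun j _ => (v j).2⟩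
  continuous_toFun := Continuous.subtype_mk
    (continuous_finsetSum _ fun j _ => (continuous_coord j).smul continuous_const) _

theorem comb_apply {m N : ℕ} (v : Fin (m + 1) → TopSimplex N) (t : TopSimplex m)
    (x : Fin (N + 1)) : comb v t x = ∑ j, t j * v j x :=
  Finset.sum_apply x Finset.univ fun j => t j • (v j : Fin (N + 1) → ℝ)

/-- The tuple of all vertices of the standard simplex. -/
noncomputable def vertices (N : ℕ) (i : Fin (N + 1)) : TopSimplex N :=
  stdSimplex.vertex i

theorem vertices_apply (N : ℕ) (i j : Fin (N + 1)) :
    vertices N i j = if j = i then 1 else 0 :=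
  Pi.single_apply i (1 : ℝ) j

theorem comb_vertices {N : ℕ} (t : TopSimplex N) : comb (vertices N) t = t :=
  ext_coord fun x => by simp [comb_apply, vertices_apply]

theorem comb_apply_vertices {m N : ℕ} (v : Fin (m + 1) → TopSimplex N) (i : Fin (m + 1)) :
    comb v (vertices m i) = v i :=
  ext_coord fun x => by simp [comb_apply, vertices_apply]

theorem comb_comp_vertices_comp {k m N : ℕ} (v : Fin (m + 1) → TopSimplex N)
    (u : Fin (k + 1) → Fin (m + 1)) : comb v ∘ vertices m ∘ u = v ∘ u :=
  funext fun j => comb_apply_vertices v (u j)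

theorem comb_comb {k m N : ℕ} (w : Fin (m + 1) → TopSimplex N)
    (v : Fin (k + 1) → TopSimplex m) (t : TopSimplex k) :
    comb w (comb v t) = comb (comb w ∘ v) t := by
  refine ext_coord fun x => ?_
  simp only [comb_apply, Function.comp_apply, Finset.sum_mul, Finset.mul_sum, mul_assoc]
  exact Finset.sum_comm

theorem comb_mem_range_comb {k m N : ℕ} {v : Fin (m + 1) → TopSimplex N}
    {w : Fin (k + 1) → TopSimplex N} (h : ∀ j, w j ∈ Set.range (comb v)) (t : TopSimplex k) :
    comb w t ∈ Set.range (comb v) := by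
  choose u hu using h
  exact ⟨comb u t, by rw [comb_comb, show comb v ∘ u = w from funext hu]⟩

/-- The barycenter of a tuple of points of a simplex. -/
noncomputable def bary (N : ℕ) : TupleChain.Barycenters (TopSimplex N) := fun _ v =>
  comb v stdSimplex.barycenter

theorem comb_bary {N N' : ℕ} (w : Fin (N + 1) → TopSimplex N') (m : ℕ)
    (v : Fin (m + 1) → TopSimplex N) : comb w (bary N m v) = bary N' m (comb w ∘ v) :=
  comb_comb w v _

theorem dist_comb_le {m N : ℕ} {v : Fin (m + 1) → TopSimplex N} {x : TopSimplex N} {ρ : ℝ}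
    (h : ∀ j, dist (v j) x ≤ ρ) (t : TopSimplex m) : dist (comb v t) x ≤ ρ :=
  Metric.mem_closedBall.1 <| (convex_closedBall (x : Fin (N + 1) → ℝ) ρ).sum_mem
    (fun j _ => stdSimplex.zero_le t j) (stdSimplex.sum_eq_one t) fun j _ => h j

theorem dist_bary_le {m N : ℕ} {v : Fin (m + 1) → TopSimplex N} {i : Fin (m + 1)} {ρ : ℝ}
    (h : ∀ j, dist (v j) (v i) ≤ ρ) : dist (bary N m v) (v i) ≤ m / (m + 1) * ρ := by
  have hbary : (bary N m v).1 = (1 / (m + 1) : ℝ) • ∑ j, (v j).1 := by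
    have hcoord (j : Fin (m + 1)) :
        (stdSimplex.barycenter : TopSimplex m) j = 1 / (m + 1 : ℝ) :=
      (stdSimplex.barycenter_apply (𝕜 := ℝ) j).trans (by simp)
    calc (bary N m v).1 = ∑ j, (stdSimplex.barycenter : TopSimplex m) j • (v j).1 := rfl
      _ = _ := by simp only [hcoord, Finset.smul_sum]
  rw [Subtype.dist_eq, hbary]
  exact dist_smul_sum_le h

end TopSimplex

section Supports

variable {R K : Type*} [CommRing R]

/-- The tuples with all entries in `A`. -/
def tuplesIn (A : Set K) (m : ℕ) : Set (Fin m → K) := {v | ∀ j, v j ∈ A}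

/-- The tuples of diameter at most `ρ`. -/
def tuplesOfMesh (K : Type*) [PseudoMetricSpace K] (ρ : ℝ) (m : ℕ) : Set (Fin m → K) :=
  {v | ∀ i j, dist (v i) (v j) ≤ ρ}

namespace TupleChain

open TopSimplex

theorem bdry_single_mem {m : ℕ} {N : Submodule R (TupleChain R K m)} {v : Fin (m + 1) → K}
    (h : ∀ i : Fin (m + 1), Finsupp.single (v ∘ i.succAbove) (1 : R) ∈ N) :
    bdry m (Finsupp.single v 1) ∈ N := by
  rw [bdry_single]
  exact N.sum_mem fun i _ => N.smul_mem _ (h i)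

theorem bdry_single_mem_tuplesIn {A : Set K} {m : ℕ} {v : Fin (m + 1) → K}
    (hv : v ∈ tuplesIn A (m + 1)) :
    bdry m (Finsupp.single v 1) ∈ Finsupp.supported R R (tuplesIn A m) :=
  bdry_single_mem fun _ => Finsupp.single_mem_supported R _ fun _ => hv _

theorem cone_mem_tuplesIn {A : Set K} {x : K} (hx : x ∈ A) {m : ℕ} {c : TupleChain R K m}
    (hc : c ∈ Finsupp.supported R R (tuplesIn A m)) :
    cone x m c ∈ Finsupp.supported R R (tuplesIn A (m + 1)) := by
  refine map_mem_of_mem_supported (fun v hv => ?_) hc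
  rw [cone_single]
  exact Finsupp.single_mem_supported R _ (Fin.cases hx hv)

section Hull

variable {A : Set K} {b : Barycenters K} (hb : ∀ m, ∀ v ∈ tuplesIn A (m + 1), b m v ∈ A)
include hb

theorem sd_mem_tuplesIn {m : ℕ} {c : TupleChain R K m}
    (hc : c ∈ Finsupp.supported R R (tuplesIn A m)) :
    sd b m c ∈ Finsupp.supported R R (tuplesIn A m) := by
  induction m with
  | zero => exact hc
  | succ m ih =>
    refine map_mem_of_mem_supported (fun v hv => ?_) hc
    rw [sd_single]
    exact cone_mem_tuplesIn (hb m v hv) (ih (bdry_single_mem_tuplesIn hv))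

theorem sdHomotopy_mem_tuplesIn {m : ℕ} {c : TupleChain R K m}
    (hc : c ∈ Finsupp.supported R R (tuplesIn A m)) :
    sdHomotopy b m c ∈ Finsupp.supported R R (tuplesIn A (m + 1)) := by
  induction m with
  | zero => exact Submodule.zero_mem _
  | succ m ih =>
    refine map_mem_of_mem_supported (fun v hv => ?_) hc
    rw [sdHomotopy_single]
    exact cone_mem_tuplesIn (hb m v hv) (Submodule.sub_mem _
      (Finsupp.single_mem_supported R _ hv) (ih (bdry_single_mem_tuplesIn hv)))

end Hull

theorem cone_mem_tuplesOfMesh {K : Type*} [PseudoMetricSpace K] {x : K} {ρ : ℝ} (hρ : 0 ≤ ρ)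
    {m : ℕ} {c : TupleChain R K m}
    (hc : c ∈ Finsupp.supported R R
      (tuplesOfMesh K ρ m ∩ tuplesIn (Metric.closedBall x ρ) m)) :
    cone x m c ∈ Finsupp.supported R R (tuplesOfMesh K ρ (m + 1)) := by
  refine map_mem_of_mem_supported (fun v hv => ?_) hc
  rw [cone_single]
  refine Finsupp.single_mem_supported R _ fun i j => ?_
  cases i using Fin.cases <;> cases j using Fin.cases
  · simpa using hρ
  · simpa [dist_comm] using hv.2 _
  · simpa using hv.2 _
  · simpa using hv.1 _ _

theorem sd_single_mem_range_comb {m N : ℕ} {v : Fin (m + 1) → TopSimplex N} {k : ℕ}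
    (u : Fin k → Fin (m + 1)) :
    sd (bary N) k (Finsupp.single (v ∘ u) 1) ∈
      Finsupp.supported R R (tuplesIn (Set.range (comb v)) k) :=
  sd_mem_tuplesIn (fun _ _ hw => comb_mem_range_comb hw _)
    (Finsupp.single_mem_supported R _ fun j => ⟨vertices m (u j), comb_apply_vertices v (u j)⟩)

theorem sd_single_mem_tuplesOfMesh_of_faces {m N : ℕ} {v : Fin (m + 1) → TopSimplex N} {ρ : ℝ}
    (hv : v ∈ tuplesOfMesh (TopSimplex N) ρ (m + 1))
    (hfaces : ∀ i : Fin (m + 1), sd (bary N) m (Finsupp.single (v ∘ i.succAbove) 1) ∈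
      Finsupp.supported R R (tuplesOfMesh (TopSimplex N) (m / (m + 1) * ρ) m)) :
    sd (bary N) (m + 1) (Finsupp.single v 1) ∈
      Finsupp.supported R R (tuplesOfMesh (TopSimplex N) (m / (m + 1) * ρ) (m + 1)) := by
  have hρ : 0 ≤ ρ := dist_nonneg.trans (hv 0 0)
  have hball : Set.range (comb v) ⊆ Metric.closedBall (bary N m v) (m / (m + 1) * ρ) := by
    rintro _ ⟨t, rfl⟩
    refine dist_comb_le (fun j => ?_) t
    rw [dist_comm]
    exact dist_bary_le fun i => hv i j
  have hmono : tuplesIn (Set.range (comb v)) m ⊆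
      tuplesIn (Metric.closedBall (bary N m v) (m / (m + 1) * ρ)) m :=
    fun _ hw j => hball (hw j)
  rw [sd_single]
  refine cone_mem_tuplesOfMesh (by positivity) ?_
  rw [Finsupp.supported_inter, ← Submodule.mem_comap]
  exact bdry_single_mem fun i => ⟨hfaces i,
    Finsupp.supported_mono hmono (sd_single_mem_range_comb i.succAbove)⟩

theorem sd_single_mem_tuplesOfMesh {m N : ℕ} {v : Fin (m + 1) → TopSimplex N} {ρ : ℝ}
    (hv : v ∈ tuplesOfMesh (TopSimplex N) ρ (m + 1)) :
    sd (bary N) (m + 1) (Finsupp.single v 1) ∈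
      Finsupp.supported R R (tuplesOfMesh (TopSimplex N) (m / (m + 1) * ρ) (m + 1)) := by
  induction m with
  | zero =>
    exact sd_single_mem_tuplesOfMesh_of_faces hv fun i =>
      Finsupp.single_mem_supported R _ fun j => j.elim0
  | succ m ih =>
    refine sd_single_mem_tuplesOfMesh_of_faces hv fun i =>
      Finsupp.supported_mono (fun w hw a b => (hw a b).trans ?_) (ih fun a b => hv _ _)
    refine mul_le_mul_of_nonneg_right ?_ (dist_nonneg.trans (hv 0 0))
    push_cast
    rw [div_le_div_iff₀ (by positivity) (by positivity)]
    nlinarith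

theorem sd_pow_single_vertices_mem_tuplesOfMesh (N k : ℕ) :
    (sd (bary N) (N + 1) ^ k) (Finsupp.single (vertices N) 1) ∈
      Finsupp.supported R R (tuplesOfMesh (TopSimplex N) ((N / (N + 1)) ^ k) (N + 1)) := by
  induction k with
  | zero =>
    refine Finsupp.single_mem_supported R _ fun i j => ?_
    rw [pow_zero, Subtype.dist_eq, dist_pi_le_iff zero_le_one]
    intro x
    change |vertices N i x - vertices N j x| ≤ 1
    rw [vertices_apply, vertices_apply]
    split_ifs <;> simp
  | succ k ih =>
    rw [pow_succ' (sd (bary N) (N + 1)), Module.End.mul_apply, pow_succ']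
    exact map_mem_of_mem_supported (fun v hv => sd_single_mem_tuplesOfMesh hv) ih

end TupleChain

end Supports

/-! ### Singular cochains and small simplices -/

open TupleChain TopSimplex

/-- Singular cochains with coefficients in `R`, all degrees at once. Taking the product over the
degrees keeps degree arithmetic out of the types; homogeneity is expressed through `degProj`. -/
abbrev Cochain (R E : Type*) [TopologicalSpace E] : Type _ := ∀ m : ℕ, C(TopSimplex m, E) → R

section Cochains

variable {R E : Type*} [CommRing R] [TopologicalSpace E]

/-- The `i`-th face of a singular simplex. -/
noncomputable def face {m : ℕ} (i : Fin (m + 2)) (σ : C(TopSimplex (m + 1), E)) :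
    C(TopSimplex m, E) :=
  σ.comp (comb (vertices (m + 1) ∘ i.succAbove))

theorem face_apply {m : ℕ} (i : Fin (m + 2)) (σ : C(TopSimplex (m + 1), E)) (t : TopSimplex m) :
    face i σ t = σ (comb (vertices (m + 1) ∘ i.succAbove) t) := rfl

theorem comp_comb_vertices {N : ℕ} (σ : C(TopSimplex N, E)) : σ.comp (comb (vertices N)) = σ :=
  ContinuousMap.ext fun t => congrArg σ (comb_vertices t)

theorem comp_comb_comp_comb {k m N : ℕ} (σ : C(TopSimplex N, E)) (w : Fin (m + 1) → TopSimplex N)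
    (v : Fin (k + 1) → TopSimplex m) :
    (σ.comp (comb w)).comp (comb v) = σ.comp (comb (comb w ∘ v)) :=
  ContinuousMap.ext fun t => congrArg σ (comb_comb w v t)

theorem face_comp_comb {m N : ℕ} (i : Fin (m + 2)) (σ : C(TopSimplex N, E))
    (v : Fin (m + 2) → TopSimplex N) :
    face i (σ.comp (comb v)) = σ.comp (comb (v ∘ i.succAbove)) := by
  rw [face, comp_comb_comp_comb, comb_comp_vertices_comp]

/-- The singular coboundary. -/
noncomputable def coboundary : Cochain R E →ₗ[R] Cochain R E :=
  LinearMap.pi fun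
    | 0 => 0
    | m + 1 => LinearMap.pi fun σ =>
        ∑ i : Fin (m + 2), (-1 : R) ^ (i : ℕ) •
          (LinearMap.proj (face i σ) : (C(TopSimplex m, E) → R) →ₗ[R] R) ∘ₗ
            (LinearMap.proj m : Cochain R E →ₗ[R] C(TopSimplex m, E) → R)

theorem coboundary_zero (f : Cochain R E) : coboundary f 0 = 0 := rfl

theorem coboundary_succ (f : Cochain R E) (m : ℕ) (σ : C(TopSimplex (m + 1), E)) :
    coboundary f (m + 1) σ = ∑ i : Fin (m + 2), (-1 : R) ^ (i : ℕ) * f m (face i σ) := by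
  simp [coboundary]

/-- Evaluation of a cochain on the pushforward along `σ` of affine chains in a simplex. -/
noncomputable def evalOn (f : Cochain R E) {N : ℕ} (σ : C(TopSimplex N, E)) (m : ℕ) :
    TupleChain R (TopSimplex N) (m + 1) →ₗ[R] R :=
  Finsupp.linearCombination R fun v => f m (σ.comp (comb v))

theorem evalOn_single (f : Cochain R E) {N : ℕ} (σ : C(TopSimplex N, E)) (m : ℕ)
    (v : Fin (m + 1) → TopSimplex N) :
    evalOn f σ m (Finsupp.single v 1) = f m (σ.comp (comb v)) := by
  simp [evalOn]

theorem evalOn_single_vertices (f : Cochain R E) {N : ℕ} (σ : C(TopSimplex N, E)) :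
    evalOn f σ N (Finsupp.single (vertices N) 1) = f N σ := by
  rw [evalOn_single, comp_comb_vertices]

theorem evalOn_coboundary (f : Cochain R E) {N : ℕ} (σ : C(TopSimplex N, E)) (m : ℕ)
    (c : TupleChain R (TopSimplex N) (m + 2)) :
    evalOn (coboundary f) σ (m + 1) c = evalOn f σ m (bdry (m + 1) c) := by
  suffices evalOn (coboundary f) σ (m + 1) = evalOn f σ m ∘ₗ bdry (m + 1) from
    LinearMap.congr_fun this c
  refine linearMap_ext_single_one fun v => ?_
  simp only [LinearMap.comp_apply, evalOn_single, bdry_single, coboundary_succ, map_sum, map_smul,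
    face_comp_comb, smul_eq_mul]

theorem evalOn_comp_comb (f : Cochain R E) {N N' : ℕ} (σ : C(TopSimplex N, E))
    (w : Fin (N' + 1) → TopSimplex N) (m : ℕ) (c : TupleChain R (TopSimplex N') (m + 1)) :
    evalOn f (σ.comp (comb w)) m c = evalOn f σ m (map (comb w) (m + 1) c) := by
  suffices evalOn f (σ.comp (comb w)) m = evalOn f σ m ∘ₗ map (comb w) (m + 1) from
    LinearMap.congr_fun this c
  refine linearMap_ext_single_one fun v => ?_
  rw [LinearMap.comp_apply, evalOn_single, map_single, evalOn_single, comp_comb_comp_comb]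

theorem coboundary_coboundary (f : Cochain R E) : coboundary (coboundary f) = 0 := by
  funext m σ
  match m with
  | 0 => rfl
  | 1 => simp [coboundary_succ, coboundary_zero]
  | m + 2 =>
    rw [← evalOn_single_vertices (coboundary (coboundary f)) σ, evalOn_coboundary,
      evalOn_coboundary, bdry_bdry, map_zero]
    rfl

/-- The relative cochains of the pair `(E, E \ X)`: those vanishing on the singular simplices that
miss `X`. Their cohomology is the cohomology of `E` with supports in `X`. -/
def relCochains (R : Type*) [CommRing R] (X : Set E) : Submodule R (Cochain R E) where
  carrier := {f | ∀ m (σ : C(TopSimplex m, E)), (∀ t, σ t ∉ X) → f m σ = 0}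
  add_mem' hf hg m σ h := by simp [hf m σ h, hg m σ h]
  zero_mem' _ _ _ := rfl
  smul_mem' r f hf m σ h := by simp [hf m σ h]

theorem relCochains_mono {X Y : Set E} (h : X ⊆ Y) : relCochains R X ≤ relCochains R Y :=
  fun _ hf m σ hσ => hf m σ fun t ht => hσ t (h ht)

theorem coboundary_mem_relCochains {X : Set E} {f : Cochain R E} (hf : f ∈ relCochains R X) :
    coboundary f ∈ relCochains R X
  | 0, _, _ => rfl
  | m + 1, σ, hσ => by
    rw [coboundary_succ]
    exact Finset.sum_eq_zero fun i _ => by rw [hf m (face i σ) fun t => hσ _, mul_zero]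

theorem exists_eq_add_of_mem_relCochains_union {X Y : Set E} {f : Cochain R E}
    (hf : f ∈ relCochains R (X ∪ Y)) :
    ∃ g ∈ relCochains R X, ∃ h ∈ relCochains R Y, f = g + h := by
  classical
  refine ⟨fun m σ => if ∀ t, σ t ∉ X then 0 else f m σ, fun m σ h => if_pos h,
    fun m σ => if ∀ t, σ t ∉ X then f m σ else 0, fun m σ hY => ?_, ?_⟩
  · exact ite_eq_right_iff.2 fun hX => hf m σ fun t ht => ht.elim (hX t) (hY t)
  · funext m σ
    simp only [Pi.add_apply]
    split_ifs <;> simp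

theorem evalOn_eq_zero_of_forall_notMem {X : Set E} {f : Cochain R E} (hf : f ∈ relCochains R X)
    {N : ℕ} {σ : C(TopSimplex N, E)} (hσ : ∀ t, σ t ∉ X) (m : ℕ)
    (c : TupleChain R (TopSimplex N) (m + 1)) : evalOn f σ m c = 0 := by
  suffices evalOn f σ m = 0 from LinearMap.congr_fun this c
  exact linearMap_ext_single_one fun v => (evalOn_single f σ m v).trans (hf _ _ fun t => hσ _)

/-- The homogeneous component of degree `j`. -/
noncomputable def degProj (j : ℕ) : Cochain R E →ₗ[R] Cochain R E :=
  LinearMap.single R _ j ∘ₗ LinearMap.proj j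

theorem degProj_apply (j : ℕ) (f : Cochain R E) (m : ℕ) :
    degProj j f m = if m = j then f m else 0 := by
  obtain rfl | h := eq_or_ne m j
  · simp [degProj]
  · simp [degProj, h]

theorem degProj_mem_relCochains {X : Set E} {f : Cochain R E} (hf : f ∈ relCochains R X) (j : ℕ) :
    degProj j f ∈ relCochains R X := by
  intro m σ hσ
  rw [degProj_apply]
  split_ifs
  exacts [hf m σ hσ, rfl]

theorem degProj_degProj (i j : ℕ) (f : Cochain R E) :
    degProj i (degProj j f) = if i = j then degProj j f else 0 := by
  funext m
  split_ifs with h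
  · subst h
    simp only [degProj_apply, ite_eq_left_iff]
    exact fun h => (if_neg h).symm
  · simp only [degProj_apply, Pi.zero_apply, ite_eq_right_iff]
    exact fun hi hj => absurd (hi.symm.trans hj) h

theorem coboundary_degProj (j : ℕ) (f : Cochain R E) :
    coboundary (degProj j f) = degProj (j + 1) (coboundary f) := by
  funext m σ
  cases m with
  | zero => simp [degProj_apply, coboundary_zero]
  | succ m =>
    simp only [degProj_apply, coboundary_succ, Nat.add_right_cancel_iff]
    split_ifs <;> simp [coboundary_succ]

theorem degProj_zero_coboundary (f : Cochain R E) : degProj 0 (coboundary f) = 0 := by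
  funext m
  rw [degProj_apply]
  split_ifs with h
  · subst h
    rfl
  · rfl

end Cochains

section SmallSimplices

variable {R E : Type*} [CommRing R] [TopologicalSpace E]

theorem div_add_one_lt_one (N : ℕ) : (N / (N + 1) : ℝ) < 1 :=
  (div_lt_one (by positivity)).2 (lt_add_one _)

theorem div_add_one_mono {m n : ℕ} (h : m ≤ n) : (m / (m + 1) : ℝ) ≤ n / (n + 1) := by
  have : (m : ℝ) ≤ n := Nat.cast_le.2 h
  rw [div_le_div_iff₀ (by positivity) (by positivity)]
  linarith

/-- Balls whose radius is the mesh of the `k`-fold barycentric subdivision are mapped by `σ` into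
the complement of `X` or into the complement of `Y`. -/
def IsSmallAfter (X Y : Set E) {N : ℕ} (σ : C(TopSimplex N, E)) (k : ℕ) : Prop :=
  ∀ x : TopSimplex N, (∀ y, dist y x ≤ (N / (N + 1) : ℝ) ^ k → σ y ∉ X) ∨
    ∀ y, dist y x ≤ (N / (N + 1) : ℝ) ^ k → σ y ∉ Y

/-- The affine simplices whose image under `σ` misses `X` or misses `Y`. -/
def smallTuples (X Y : Set E) {N : ℕ} (σ : C(TopSimplex N, E)) (m : ℕ) :
    Set (Fin (m + 1) → TopSimplex N) :=
  {v | (∀ t, σ (comb v t) ∉ X) ∨ ∀ t, σ (comb v t) ∉ Y}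

/-- The least number of subdivisions after which `σ` is small, and `0` if there is none. -/
noncomputable def smallDepth (X Y : Set E) {N : ℕ} (σ : C(TopSimplex N, E)) : ℕ :=
  sInf {k | IsSmallAfter X Y σ k}

variable {X Y : Set E}

theorem IsSmallAfter.mono {N : ℕ} {σ : C(TopSimplex N, E)} {k l : ℕ} (hk : IsSmallAfter X Y σ k)
    (h : k ≤ l) : IsSmallAfter X Y σ l := by
  intro x
  have hpow : (N / (N + 1) : ℝ) ^ l ≤ (N / (N + 1) : ℝ) ^ k :=
    pow_le_pow_of_le_one (by positivity) (div_add_one_lt_one N).le h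
  exact (hk x).imp (fun h y hy => h y (hy.trans hpow)) (fun h y hy => h y (hy.trans hpow))

theorem exists_isSmallAfter (hX : IsClosed X) (hY : IsClosed Y) {N : ℕ} {σ : C(TopSimplex N, E)}
    (h : ∀ t, σ t ∉ X ∩ Y) : ∃ k, IsSmallAfter X Y σ k := by
  obtain ⟨ε, hε, hball⟩ := lebesgue_number_lemma_of_metric (s := (Set.univ : Set (TopSimplex N)))
    (c := fun b : Bool => σ ⁻¹' (if b then X else Y)ᶜ) isCompact_univ
    (fun b => by
      cases b
      exacts [hY.isOpen_compl.preimage σ.continuous, hX.isOpen_compl.preimage σ.continuous])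
    (fun t _ => by
      by_cases ht : σ t ∈ X
      exacts [Set.mem_iUnion.2 ⟨false, fun hY => h t ⟨ht, hY⟩⟩, Set.mem_iUnion.2 ⟨true, ht⟩])
  obtain ⟨k, hk⟩ := exists_pow_lt_of_lt_one hε (div_add_one_lt_one N)
  refine ⟨k, fun x => ?_⟩
  obtain ⟨b, hb⟩ := hball x (Set.mem_univ x)
  cases b
  · exact Or.inr fun y hy => hb (Metric.mem_ball.2 (hy.trans_lt hk))
  · exact Or.inl fun y hy => hb (Metric.mem_ball.2 (hy.trans_lt hk))

theorem dist_comb_vertices_succAbove_le {N : ℕ} (i : Fin (N + 2)) (x y : TopSimplex N) :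
    dist (comb (vertices (N + 1) ∘ i.succAbove) y) (comb (vertices (N + 1) ∘ i.succAbove) x) ≤
      dist y x := by
  have hface (x : TopSimplex N) (j) :
      comb (vertices (N + 1) ∘ i.succAbove) x (i.succAbove j) = x j := by
    simp [comb_apply, vertices_apply]
  have hopp (x : TopSimplex N) : comb (vertices (N + 1) ∘ i.succAbove) x i = 0 := by
    simp [comb_apply, vertices_apply, (Fin.succAbove_ne i _).symm]
  rw [Subtype.dist_eq, dist_pi_le_iff dist_nonneg]
  intro z
  change dist (comb (vertices (N + 1) ∘ i.succAbove) y z)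
    (comb (vertices (N + 1) ∘ i.succAbove) x z) ≤ _
  rcases Fin.eq_self_or_eq_succAbove i z with rfl | ⟨j, rfl⟩
  · rw [hopp, hopp, dist_self]
    exact dist_nonneg
  · rw [hface, hface]
    exact dist_le_pi_dist y.1 x.1 j

theorem IsSmallAfter.face {N : ℕ} {σ : C(TopSimplex (N + 1), E)} {k : ℕ}
    (hk : IsSmallAfter X Y σ k) (i : Fin (N + 2)) : IsSmallAfter X Y (face i σ) k := by
  intro x
  have hpow : (N / (N + 1) : ℝ) ^ k ≤ ((N + 1 : ℕ) / ((N + 1 : ℕ) + 1) : ℝ) ^ k :=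
    pow_le_pow_left₀ (by positivity) (div_add_one_mono N.le_succ) k
  exact (hk (comb (vertices (N + 1) ∘ i.succAbove) x)).imp
    (fun h y hy => h _ ((dist_comb_vertices_succAbove_le i x y).trans (hy.trans hpow)))
    (fun h y hy => h _ ((dist_comb_vertices_succAbove_le i x y).trans (hy.trans hpow)))

theorem isSmallAfter_smallDepth {N : ℕ} {σ : C(TopSimplex N, E)}
    (h : ∃ k, IsSmallAfter X Y σ k) : IsSmallAfter X Y σ (smallDepth X Y σ) :=
  Nat.sInf_mem h

theorem IsSmallAfter.smallDepth_le {N : ℕ} {σ : C(TopSimplex N, E)} {k : ℕ}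
    (hk : IsSmallAfter X Y σ k) : smallDepth X Y σ ≤ k :=
  Nat.sInf_le hk

theorem evalOn_eq_zero_of_mem_smallTuples {u : Cochain R E} (hX : u ∈ relCochains R X)
    (hY : u ∈ relCochains R Y) {N m : ℕ} {σ : C(TopSimplex N, E)}
    {c : TupleChain R (TopSimplex N) (m + 1)}
    (hc : c ∈ Finsupp.supported R R (smallTuples X Y σ m)) : evalOn u σ m c = 0 := by
  refine (Submodule.mem_bot R).1 (map_mem_of_mem_supported (fun v hv => ?_) hc)
  rw [evalOn_single, Submodule.mem_bot]
  exact hv.elim (fun h => hX _ _ h) fun h => hY _ _ h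

theorem IsSmallAfter.sd_pow_mem_smallTuples {N : ℕ} {σ : C(TopSimplex N, E)} {k : ℕ}
    (hk : IsSmallAfter X Y σ k) :
    (sd (bary N) (N + 1) ^ k) (Finsupp.single (vertices N) 1) ∈
      Finsupp.supported R R (smallTuples X Y σ N) :=
  Finsupp.supported_mono
    (fun v hv => (hk (v 0)).imp (fun h t => h _ (dist_comb_le (fun j => hv j 0) t))
      fun h t => h _ (dist_comb_le (fun j => hv j 0) t))
    (sd_pow_single_vertices_mem_tuplesOfMesh N k)

theorem sdHomotopy_mem_smallTuples {N : ℕ} {σ : C(TopSimplex N, E)} {m : ℕ}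
    {c : TupleChain R (TopSimplex N) (m + 1)}
    (hc : c ∈ Finsupp.supported R R (smallTuples X Y σ m)) :
    sdHomotopy (bary N) (m + 1) c ∈ Finsupp.supported R R (smallTuples X Y σ (m + 1)) := by
  refine map_mem_of_mem_supported (fun v hv => ?_) hc
  have hhull : sdHomotopy (bary N) (m + 1) (Finsupp.single v 1) ∈
      Finsupp.supported R R (tuplesIn (Set.range (comb v)) (m + 2)) :=
    sdHomotopy_mem_tuplesIn (fun _ _ hw => comb_mem_range_comb hw _)
      (Finsupp.single_mem_supported R _ fun j => ⟨vertices m j, comb_apply_vertices v j⟩)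
  refine Finsupp.supported_mono (fun w hw => ?_) hhull
  choose s hs using fun t => comb_mem_range_comb hw t
  exact hv.imp (fun h t => hs t ▸ h (s t)) (fun h t => hs t ▸ h (s t))

theorem evalOn_sdPowHomotopy_eq {u : Cochain R E} (hX : u ∈ relCochains R X)
    (hY : u ∈ relCochains R Y) {N : ℕ} {σ : C(TopSimplex N, E)} {k l : ℕ}
    (hk : IsSmallAfter X Y σ k) (hl : k ≤ l) :
    evalOn u σ (N + 1) (sdPowHomotopy (bary N) l (N + 1) (Finsupp.single (vertices N) 1)) =
      evalOn u σ (N + 1)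
        (sdPowHomotopy (bary N) k (N + 1) (Finsupp.single (vertices N) 1)) := by
  induction l, hl using Nat.le_induction with
  | base => rfl
  | succ l hl ih =>
    rw [sdPowHomotopy_succ, LinearMap.add_apply, map_add, LinearMap.comp_apply, ih,
      evalOn_eq_zero_of_mem_smallTuples hX hY
        (sdHomotopy_mem_smallTuples (hk.mono hl).sd_pow_mem_smallTuples), add_zero]

/-- The cochain homotopy that subdivides every singular simplex just often enough to become
small. -/
noncomputable def smallHomotopy (X Y : Set E) (u : Cochain R E) : Cochain R E := fun m σ =>
  evalOn u σ (m + 1)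
    (sdPowHomotopy (bary m) (smallDepth X Y σ) (m + 1) (Finsupp.single (vertices m) 1))

theorem smallHomotopy_eq_zero {m : ℕ} {σ : C(TopSimplex m, E)} (h : IsSmallAfter X Y σ 0)
    (u : Cochain R E) : smallHomotopy X Y u m σ = 0 := by
  rw [smallHomotopy, Nat.le_zero.1 h.smallDepth_le]
  simp [sdPowHomotopy]

theorem evalOn_sdPowHomotopy_bdry_single_vertices {u : Cochain R E} (hX : u ∈ relCochains R X)
    (hY : u ∈ relCochains R Y) {N : ℕ} {σ : C(TopSimplex N, E)}
    (hσ : IsSmallAfter X Y σ (smallDepth X Y σ)) :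
    evalOn u σ N (sdPowHomotopy (bary N) (smallDepth X Y σ) N
      (bdry N (Finsupp.single (vertices N) 1))) = coboundary (smallHomotopy X Y u) N σ := by
  cases N with
  | zero => simp [coboundary_zero, sdPowHomotopy, sdHomotopy]
  | succ N =>
    rw [coboundary_succ, bdry_single]
    simp only [map_sum, map_smul, smul_eq_mul]
    refine Finset.sum_congr rfl fun i _ => congrArg _ ?_
    have hface := hσ.face i
    rw [smallHomotopy, ← evalOn_sdPowHomotopy_eq hX hY (isSmallAfter_smallDepth ⟨_, hface⟩)
      hface.smallDepth_le, face, evalOn_comp_comb, map_sdPowHomotopy (comb_bary _), map_single,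
      show comb (vertices (N + 1) ∘ i.succAbove) ∘ vertices N = vertices (N + 1) ∘ i.succAbove from
        funext (comb_apply_vertices _)]

/-- Excision for closed supports, by small simplices. -/
theorem exists_sub_coboundary_mem_relCochains_inter (hXc : IsClosed X) (hYc : IsClosed Y)
    {u : Cochain R E} (hX : u ∈ relCochains R X) (hY : u ∈ relCochains R Y)
    (hu : coboundary u ∈ relCochains R (X ∩ Y)) :
    ∃ w ∈ relCochains R X, w ∈ relCochains R Y ∧ u - coboundary w ∈ relCochains R (X ∩ Y) := by
  refine ⟨smallHomotopy X Y u, fun m σ h => smallHomotopy_eq_zero (fun _ => .inl fun y _ => h y) u,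
    fun m σ h => smallHomotopy_eq_zero (fun _ => .inr fun y _ => h y) u, fun N σ hσ => ?_⟩
  have hsmall := isSmallAfter_smallDepth (exists_isSmallAfter hXc hYc hσ)
  have hhtpy := congrArg (evalOn u σ N)
    (bdry_sdPowHomotopy (bary N) (smallDepth X Y σ) N (Finsupp.single (vertices N) 1))
  rw [map_sub, evalOn_eq_zero_of_mem_smallTuples hX hY hsmall.sd_pow_mem_smallTuples, sub_zero,
    evalOn_single_vertices, map_add, ← evalOn_coboundary, evalOn_eq_zero_of_forall_notMem hu hσ,
    zero_add, evalOn_sdPowHomotopy_bdry_single_vertices hX hY hsmall] at hhtpy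
  exact sub_eq_zero.2 hhtpy.symm

end SmallSimplices

/-! ### Acyclicity and local generators -/

section Acyclic

variable {R M : Type*} [CommRing R] [AddCommGroup M] [Module R M] {D : M →ₗ[R] M}

/-- Every cycle of `D` in the submodule `N` is a boundary of an element of `N`. -/
def IsAcyclicOn (D : M →ₗ[R] M) (N : Submodule R M) : Prop :=
  ∀ x ∈ N, D x = 0 → ∃ y ∈ N, D y = x

theorem IsAcyclicOn.sup (hD : ∀ x, D (D x) = 0) {N N' : Submodule R M}
    (hN : ∀ x ∈ N, D x ∈ N) (hN' : ∀ x ∈ N', D x ∈ N') (ha : IsAcyclicOn D N)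
    (ha' : IsAcyclicOn D N') (hinf : IsAcyclicOn D (N ⊓ N')) : IsAcyclicOn D (N ⊔ N') := by
  intro x hx hcycle
  obtain ⟨a, haN, b, hbN, rfl⟩ := Submodule.mem_sup.1 hx
  have hab : D a = -D b := by rw [eq_neg_iff_add_eq_zero, ← map_add, hcycle]
  have hmem : D a ∈ N ⊓ N' := ⟨hN a haN, hab ▸ neg_mem (hN' b hbN)⟩
  obtain ⟨w, ⟨hwN, hwN'⟩, hw⟩ := hinf _ hmem (hD a)
  obtain ⟨y, hy, hDy⟩ := ha (a - w) (sub_mem haN hwN) (by rw [map_sub, hw, sub_self])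
  obtain ⟨y', hy', hDy'⟩ := ha' (b + w) (add_mem hbN hwN')
    (by rw [map_add, hw, hab, add_neg_cancel])
  refine ⟨y + y', Submodule.add_mem_sup hy hy', ?_⟩
  rw [map_add, hDy, hDy']
  abel

end Acyclic

section ConeHomotopy

namespace TopSimplex

open Classical in
/-- The projection of a simplex from its vertex `0` to the opposite face; at the vertex `0` itself
the value is an arbitrary vertex. -/
noncomputable def projOpposite {m : ℕ} (t : TopSimplex (m + 1)) : TopSimplex m :=
  if h : t 0 = 1 then vertices m 0 else
    ⟨fun j => t j.succ / (1 - t 0),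
      fun j => div_nonneg (stdSimplex.zero_le t _) (sub_nonneg.2 (stdSimplex.le_one t 0)), by
      have hsum := stdSimplex.sum_eq_one t
      rw [Fin.sum_univ_succ] at hsum
      rw [← Finset.sum_div, div_eq_one_iff_eq (sub_ne_zero.2 (Ne.symm h))]
      linarith⟩

theorem projOpposite_apply {m : ℕ} {t : TopSimplex (m + 1)} (h : t 0 ≠ 1) (j : Fin (m + 1)) :
    projOpposite t j = t j.succ / (1 - t 0) := by
  rw [projOpposite, dif_neg h]
  rfl

theorem continuousAt_projOpposite {m : ℕ} {t : TopSimplex (m + 1)} (h : t 0 ≠ 1) :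
    ContinuousAt (projOpposite (m := m)) t := by
  rw [Topology.IsInducing.subtypeVal.continuousAt_iff, continuousAt_pi]
  intro j
  have hquot : ContinuousAt (fun t : TopSimplex (m + 1) => t j.succ / (1 - t 0)) t :=
    (continuous_coord _).continuousAt.div
      (continuousAt_const.sub (continuous_coord 0).continuousAt) (sub_ne_zero.2 (Ne.symm h))
  refine hquot.congr ?_
  filter_upwards [(continuous_coord 0).continuousAt.eventually_ne h] with s hs
  exact (projOpposite_apply hs j).symm

theorem comb_vertices_succ_zero {m : ℕ} (t : TopSimplex m) :
    comb (vertices (m + 1) ∘ (0 : Fin (m + 2)).succAbove) t 0 = 0 := by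
  simp [comb_apply, vertices_apply, eq_comm]

theorem projOpposite_comb_vertices_succ {m : ℕ} (t : TopSimplex m) :
    projOpposite (comb (vertices (m + 1) ∘ (0 : Fin (m + 2)).succAbove) t) = t := by
  refine ext_coord fun j => ?_
  rw [projOpposite_apply (by rw [comb_vertices_succ_zero]; exact zero_ne_one),
    comb_vertices_succ_zero]
  simp [comb_apply, vertices_apply]

theorem comb_vertices_succ_succAbove_zero {m : ℕ} (i : Fin (m + 2)) (t : TopSimplex (m + 1)) :
    comb (vertices (m + 2) ∘ i.succ.succAbove) t 0 = t 0 := by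
  rw [comb_apply, Fin.sum_univ_succ]
  simp [vertices_apply, eq_comm]

theorem projOpposite_comb_vertices_succ_succAbove {m : ℕ} (i : Fin (m + 2))
    {t : TopSimplex (m + 1)} (h : t 0 ≠ 1) :
    projOpposite (comb (vertices (m + 2) ∘ i.succ.succAbove) t) =
      comb (vertices (m + 1) ∘ i.succAbove) (projOpposite t) := by
  refine ext_coord fun j => ?_
  rw [projOpposite_apply (by rwa [comb_vertices_succ_succAbove_zero]),
    comb_vertices_succ_succAbove_zero, comb_apply, comb_apply, Fin.sum_univ_succ]
  simp only [projOpposite_apply h, Function.comp, Fin.succ_succAbove_zero,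
    Fin.succ_succAbove_succ, vertices_apply, Fin.succ_ne_zero, if_false, mul_zero, zero_add,
    Fin.succ_inj, div_mul_eq_mul_div, ← Finset.sum_div]

theorem comb_vertices_one_succAbove (t : TopSimplex 0) :
    comb (vertices 1 ∘ (1 : Fin 2).succAbove) t 0 = 1 := by
  have hvertex (x : Fin 1) : (1 : Fin 2).succAbove x = 0 := by decide +revert
  simp [comb_apply, vertices_apply, hvertex]

end TopSimplex

variable {E : Type*} [SeminormedAddCommGroup E] [NormedSpace ℝ E]

theorem continuous_smul_add_smul_projOpposite (x₀ : E) {m : ℕ} (σ : C(TopSimplex m, E)) :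
    Continuous fun t : TopSimplex (m + 1) => t 0 • x₀ + (1 - t 0) • σ (projOpposite t) := by
  refine ((continuous_coord 0).smul continuous_const).add (continuous_iff_continuousAt.2 ?_)
  intro t
  by_cases h : t 0 = 1
  · obtain ⟨C, hC⟩ := (isCompact_range σ.continuous).isBounded.exists_norm_le
    have hbound : Filter.Tendsto (fun s : TopSimplex (m + 1) => |1 - s 0| * C) (nhds t) (nhds 0) :=
      (((continuous_const.sub (continuous_coord 0)).abs).mul continuous_const).tendsto' t 0
        (by simp [h])
    have hlim : Filter.Tendsto (fun s : TopSimplex (m + 1) => (1 - s 0) • σ (projOpposite s))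
        (nhds t) (nhds 0) := by
      refine squeeze_zero_norm (fun s => ?_) hbound
      rw [norm_smul, Real.norm_eq_abs]
      exact mul_le_mul_of_nonneg_left (hC _ ⟨_, rfl⟩) (abs_nonneg _)
    simpa [ContinuousAt, h] using hlim
  · exact (continuousAt_const.sub (continuous_coord 0).continuousAt).smul
      (σ.continuous.continuousAt.comp (continuousAt_projOpposite h))

/-- The straight-line cone over a singular simplex, with apex `x₀` as its vertex `0`. -/
noncomputable def coneSimplex (x₀ : E) {m : ℕ} (σ : C(TopSimplex m, E)) :
    C(TopSimplex (m + 1), E) :=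
  ⟨_, continuous_smul_add_smul_projOpposite x₀ σ⟩

theorem coneSimplex_apply (x₀ : E) {m : ℕ} (σ : C(TopSimplex m, E)) (t : TopSimplex (m + 1)) :
    coneSimplex x₀ σ t = t 0 • x₀ + (1 - t 0) • σ (projOpposite t) := rfl

theorem face_zero_coneSimplex (x₀ : E) {m : ℕ} (σ : C(TopSimplex m, E)) :
    face 0 (coneSimplex x₀ σ) = σ := by
  ext1 t
  rw [face_apply, coneSimplex_apply, comb_vertices_succ_zero, projOpposite_comb_vertices_succ,
    zero_smul, zero_add, sub_zero, one_smul]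

theorem face_succ_coneSimplex (x₀ : E) {m : ℕ} (σ : C(TopSimplex (m + 1), E)) (i : Fin (m + 2)) :
    face i.succ (coneSimplex x₀ σ) = coneSimplex x₀ (face i σ) := by
  ext1 t
  rw [face_apply, coneSimplex_apply, coneSimplex_apply, comb_vertices_succ_succAbove_zero]
  by_cases h : t 0 = 1
  · simp [h]
  · rw [projOpposite_comb_vertices_succ_succAbove i h, face_apply]

theorem face_one_coneSimplex (x₀ : E) (σ : C(TopSimplex 0, E)) :
    face 1 (coneSimplex x₀ σ) = ContinuousMap.const _ x₀ := by
  ext1 t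
  rw [face_apply, coneSimplex_apply, comb_vertices_one_succAbove]
  simp

/-- The cochain homotopy dual to coning off singular simplices. -/
noncomputable def coneHomotopy {R : Type*} [CommRing R] (x₀ : E) :
    Cochain R E →ₗ[R] Cochain R E where
  toFun f m σ := f (m + 1) (coneSimplex x₀ σ)
  map_add' _ _ := rfl
  map_smul' _ _ := rfl

theorem coneHomotopy_apply {R : Type*} [CommRing R] (x₀ : E) (f : Cochain R E) {m : ℕ}
    (σ : C(TopSimplex m, E)) : coneHomotopy x₀ f m σ = f (m + 1) (coneSimplex x₀ σ) := rfl

end ConeHomotopy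

section UnitCochain

variable {R E : Type*} [CommRing R] [TopologicalSpace E]

/-- The unit of the cochain algebra: the constant `1` in degree zero. -/
noncomputable def unitCochain : Cochain R E := fun m _ => if m = 0 then 1 else 0

theorem coboundary_unitCochain : coboundary (unitCochain : Cochain R E) = 0 := by
  funext m σ
  match m with
  | 0 => rfl
  | 1 => simp [coboundary_succ, unitCochain]
  | m + 2 => simp [coboundary_succ, unitCochain]

end UnitCochain

section StarShaped

variable {R E : Type*} [CommRing R]

variable [SeminormedAddCommGroup E] [NormedSpace ℝ E]

theorem coboundary_coneHomotopy_add (x₀ : E) (f : Cochain R E) :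
    coboundary (coneHomotopy x₀ f) + coneHomotopy x₀ (coboundary f) +
      f 0 (ContinuousMap.const _ x₀) • unitCochain = f := by
  funext m σ
  simp only [Pi.add_apply, Pi.smul_apply, smul_eq_mul]
  rw [coneHomotopy_apply, coboundary_succ, Fin.sum_univ_succ, face_zero_coneSimplex]
  cases m with
  | zero => simp [coboundary_zero, unitCochain, face_one_coneSimplex]
  | succ m =>
    rw [coboundary_succ]
    simp only [face_succ_coneSimplex, coneHomotopy_apply, Fin.val_succ, pow_succ, unitCochain]
    simp

theorem coboundary_coneHomotopy_add_of_mem {x₀ : E} {X : Set E} (hx₀ : x₀ ∉ X) {f : Cochain R E}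
    (hf : f ∈ relCochains R X) :
    coboundary (coneHomotopy x₀ f) + coneHomotopy x₀ (coboundary f) = f := by
  have hhtpy := coboundary_coneHomotopy_add x₀ f
  rwa [hf 0 (ContinuousMap.const _ x₀) fun _ => hx₀, zero_smul, add_zero] at hhtpy

theorem degProj_coneHomotopy (x₀ : E) (i : ℕ) (f : Cochain R E) :
    degProj i (coneHomotopy x₀ f) = coneHomotopy x₀ (degProj (i + 1) f) := by
  funext m σ
  simp only [coneHomotopy_apply, degProj_apply, Nat.add_right_cancel_iff]
  split_ifs <;> rfl

theorem coneHomotopy_mem_relCochains {x₀ : E} {X : Set E} (hX : StarConvex ℝ x₀ Xᶜ)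
    {f : Cochain R E} (hf : f ∈ relCochains R X) : coneHomotopy x₀ f ∈ relCochains R X :=
  fun _ _ hσ => hf _ _ fun t =>
    hX (hσ _) (stdSimplex.zero_le t 0) (sub_nonneg.2 (stdSimplex.le_one t 0)) (add_sub_cancel _ _)

theorem isAcyclicOn_relCochains_of_starConvex_compl {x₀ : E} {X : Set E} (hx₀ : x₀ ∉ X)
    (hX : StarConvex ℝ x₀ Xᶜ) : IsAcyclicOn coboundary (relCochains R X) := by
  intro f hf hd
  refine ⟨coneHomotopy x₀ f, coneHomotopy_mem_relCochains hX hf, ?_⟩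
  simpa only [hd, map_zero, add_zero] using coboundary_coneHomotopy_add_of_mem hx₀ hf

end StarShaped

section LocalGenerators

variable {R E : Type*} [CommRing R]

/-- `a` is a homogeneous cocycle of degree `h` whose class is an `R`-basis of the cohomology of `E`
with supports in `X`. -/
structure IsLocalGenerator [TopologicalSpace E] (X : Set E) (h : ℕ) (a : Cochain R E) : Prop where
  mem : a ∈ relCochains R X
  cocycle : coboundary a = 0
  homogeneous : degProj h a = a
  generates : ∀ f ∈ relCochains R X, coboundary f = 0 →
    ∃ t : R, ∃ g ∈ relCochains R X, f = t • a + coboundary g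
  eq_zero : ∀ t : R, ∀ g ∈ relCochains R X, t • a = coboundary g → t = 0

theorem mem_relCochains_univ [TopologicalSpace E] (f : Cochain R E) :
    f ∈ relCochains R (Set.univ : Set E) :=
  fun m _ h => absurd trivial (h (vertices m 0))

theorem isLocalGenerator_univ [SeminormedAddCommGroup E] [NormedSpace ℝ E] :
    IsLocalGenerator Set.univ 0 (unitCochain : Cochain R E) where
  mem := mem_relCochains_univ _
  cocycle := coboundary_unitCochain
  homogeneous := by
    funext m σ
    rw [degProj_apply]
    split_ifs with h
    · rfl
    · simp [unitCochain, h]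
  generates f _ hd := by
    refine ⟨f 0 (ContinuousMap.const _ 0), coneHomotopy 0 f, mem_relCochains_univ _, ?_⟩
    have hhtpy := coboundary_coneHomotopy_add 0 f
    rw [hd, add_comm] at hhtpy
    exact hhtpy.symm.trans (congrArg _ (add_zero _))
  eq_zero t g _ h := by
    simpa [unitCochain, coboundary_zero] using
      congrFun (congrFun h 0) (ContinuousMap.const _ 0)

section MayerVietoris

variable [TopologicalSpace E] {X Y : Set E} {h : ℕ} {a x y f : Cochain R E}

theorem IsLocalGenerator.exists_eq_add (ha : IsLocalGenerator (X ∪ Y) h a) (hX : IsClosed X)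
    (hY : IsClosed Y) :
    ∃ x ∈ relCochains R X, ∃ y ∈ relCochains R Y, a = x + y ∧ degProj h x = x ∧
      coboundary x ∈ relCochains R (X ∩ Y) := by
  obtain ⟨x, hx, y, hy, hxy⟩ := exists_eq_add_of_mem_relCochains_union ha.mem
  have hcob : coboundary x = -coboundary y := by
    rw [eq_neg_iff_add_eq_zero, ← map_add, ← hxy, ha.cocycle]
  obtain ⟨w, hwX, hwY, hw⟩ := exists_sub_coboundary_mem_relCochains_inter hX hY
    (coboundary_mem_relCochains hx) (hcob ▸ neg_mem (coboundary_mem_relCochains hy))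
    (by rw [coboundary_coboundary]; exact zero_mem _)
  refine ⟨degProj h (x - w), degProj_mem_relCochains (sub_mem hx hwX) h, degProj h (y + w),
    degProj_mem_relCochains (add_mem hy hwY) h, ?_, ?_, ?_⟩
  · rw [← map_add, sub_add_add_cancel, ← hxy, ha.homogeneous]
  · rw [degProj_degProj, if_pos rfl]
  · rw [coboundary_degProj, map_sub]
    exact degProj_mem_relCochains hw _

theorem IsLocalGenerator.exists_eq_smul_coboundary_add (ha : IsLocalGenerator (X ∪ Y) h (x + y))
    (hX : IsClosed X) (hY : IsClosed Y) (hXacyclic : IsAcyclicOn coboundary (relCochains R X))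
    (hYacyclic : IsAcyclicOn coboundary (relCochains R Y)) (hx : x ∈ relCochains R X)
    (hy : y ∈ relCochains R Y)
    (hcob : coboundary x ∈ relCochains R (X ∩ Y)) (hf : f ∈ relCochains R (X ∩ Y))
    (hd : coboundary f = 0) :
    ∃ t : R, ∃ g ∈ relCochains R (X ∩ Y), f = t • coboundary x + coboundary g := by
  obtain ⟨g₁, hg₁, rfl⟩ := hXacyclic f (relCochains_mono Set.inter_subset_left hf) hd
  obtain ⟨g₂, hg₂, hg⟩ := hYacyclic _ (relCochains_mono Set.inter_subset_right hf) hd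
  obtain ⟨t, k, hk, hdiff⟩ := ha.generates (g₁ - g₂)
    (sub_mem (relCochains_mono Set.subset_union_left hg₁)
      (relCochains_mono Set.subset_union_right hg₂)) (by rw [map_sub, hg, sub_self])
  obtain ⟨k₁, hk₁, k₂, hk₂, rfl⟩ := exists_eq_add_of_mem_relCochains_union hk
  have heq : g₁ - t • x - coboundary k₁ = g₂ + t • y + coboundary k₂ := by
    rw [map_add, smul_add] at hdiff
    rw [← sub_eq_zero] at hdiff ⊢
    rw [← hdiff]
    abel
  have hmemX : g₁ - t • x - coboundary k₁ ∈ relCochains R X :=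
    sub_mem (sub_mem hg₁ (Submodule.smul_mem _ _ hx)) (coboundary_mem_relCochains hk₁)
  have hmemY : g₁ - t • x - coboundary k₁ ∈ relCochains R Y :=
    heq ▸ add_mem (add_mem hg₂ (Submodule.smul_mem _ _ hy)) (coboundary_mem_relCochains hk₂)
  have hcobdiff : coboundary (g₁ - t • x - coboundary k₁) = coboundary g₁ - t • coboundary x := by
    rw [map_sub, map_sub, coboundary_coboundary, map_smul, sub_zero]
  obtain ⟨w, -, -, hw⟩ := exists_sub_coboundary_mem_relCochains_inter hX hY hmemX hmemY
    (hcobdiff ▸ sub_mem hf (Submodule.smul_mem _ _ hcob))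
  refine ⟨t, _, hw, ?_⟩
  rw [map_sub, coboundary_coboundary, hcobdiff]
  abel

theorem IsLocalGenerator.eq_zero_of_smul_coboundary_eq (ha : IsLocalGenerator (X ∪ Y) h (x + y))
    (hXacyclic : IsAcyclicOn coboundary (relCochains R X))
    (hYacyclic : IsAcyclicOn coboundary (relCochains R Y))
    (hx : x ∈ relCochains R X) (hy : y ∈ relCochains R Y) {t : R} {g : Cochain R E}
    (hg : g ∈ relCochains R (X ∩ Y)) (heq : t • coboundary x = coboundary g) : t = 0 := by
  have hcob : coboundary x = -coboundary y := by
    rw [eq_neg_iff_add_eq_zero, ← map_add, ha.cocycle]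
  obtain ⟨k₁, hk₁, hk₁'⟩ := hXacyclic (t • x - g)
    (sub_mem (Submodule.smul_mem _ _ hx) (relCochains_mono Set.inter_subset_left hg))
    (by rw [map_sub, map_smul, heq, sub_self])
  obtain ⟨k₂, hk₂, hk₂'⟩ := hYacyclic (t • y + g)
    (add_mem (Submodule.smul_mem _ _ hy) (relCochains_mono Set.inter_subset_right hg))
    (by rw [map_add, map_smul, ← heq, hcob, smul_neg, add_neg_cancel])
  refine ha.eq_zero t (k₁ + k₂) (add_mem (relCochains_mono Set.subset_union_left hk₁)
    (relCochains_mono Set.subset_union_right hk₂)) ?_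
  rw [map_add, hk₁', hk₂', smul_add]
  abel

/-- The connecting homomorphism of the Mayer–Vietoris sequence with supports sends generators to
generators. -/
theorem IsLocalGenerator.exists_inter (ha : IsLocalGenerator (X ∪ Y) h a) (hX : IsClosed X)
    (hY : IsClosed Y) (hXacyclic : IsAcyclicOn coboundary (relCochains R X))
    (hYacyclic : IsAcyclicOn coboundary (relCochains R Y)) :
    ∃ b : Cochain R E, IsLocalGenerator (X ∩ Y) (h + 1) b := by
  obtain ⟨x, hx, y, hy, rfl, hhom, hcob⟩ := ha.exists_eq_add hX hY
  exact ⟨coboundary x,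
    { mem := hcob
      cocycle := coboundary_coboundary x
      homogeneous := by rw [← coboundary_degProj, hhom]
      generates := fun _ hf hd =>
        ha.exists_eq_smul_coboundary_add hX hY hXacyclic hYacyclic hx hy hcob hf hd
      eq_zero := fun _ _ hg heq =>
        ha.eq_zero_of_smul_coboundary_eq hXacyclic hYacyclic hx hy hg heq }⟩

end MayerVietoris

section HalfSpaces

/-- The closed half of the affine subspace `s₀ + D` on which `φ` is at least `φ s₀`. -/
def halfSubspace [AddCommGroup E] [Module ℝ E] (s₀ : E) (D : Submodule ℝ E) (φ : E →ₗ[ℝ] ℝ) :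
    Set E :=
  {x | x - s₀ ∈ D ∧ 0 ≤ φ (x - s₀)}

section Module

variable [AddCommGroup E] [Module ℝ E] {s₀ v : E} {D : Submodule ℝ E} {φ : E →ₗ[ℝ] ℝ}

theorem sub_notMem_halfSubspace (hφ : 0 < φ v) : s₀ - v ∉ halfSubspace s₀ D φ := by
  rintro ⟨-, h⟩
  rw [sub_sub_cancel_left, map_neg] at h
  linarith

theorem starConvex_compl_halfSubspace (hv : v ∈ D) (hφ : 0 < φ v) :
    StarConvex ℝ (s₀ - v) (halfSubspace s₀ D φ)ᶜ := by
  intro y hy t b ht hb htb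
  rintro ⟨hD, hpos⟩
  obtain rfl | hb := hb.eq_or_lt
  · obtain rfl : t = 1 := by linarith
    rw [one_smul, zero_smul, add_zero] at hD hpos
    exact sub_notMem_halfSubspace hφ ⟨hD, hpos⟩
  obtain rfl : t = 1 - b := by linarith
  rw [show (1 - b) • (s₀ - v) + b • y - s₀ = b • (y - s₀) - (1 - b) • v by module] at hD hpos
  refine hy ⟨(Submodule.smul_mem_iff _ hb.ne').1 ?_, (mul_nonneg_iff_of_pos_left hb).1 ?_⟩
  · exact (Submodule.sub_mem_iff_left _ (Submodule.smul_mem _ _ hv)).1 hD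
  · rw [map_sub φ (b • _), map_smul, map_smul, smul_eq_mul, smul_eq_mul] at hpos
    linarith [mul_nonneg ht hφ.le]

theorem halfSubspace_union_neg (s₀ : E) (D : Submodule ℝ E) (φ : E →ₗ[ℝ] ℝ) :
    halfSubspace s₀ D φ ∪ halfSubspace s₀ D (-φ) = AffineSubspace.mk' s₀ D := by
  ext x
  simp [halfSubspace, ← and_or_left, AffineSubspace.mem_mk', le_total]

theorem halfSubspace_inter_neg (s₀ : E) (D : Submodule ℝ E) (φ : E →ₗ[ℝ] ℝ) :
    halfSubspace s₀ D φ ∩ halfSubspace s₀ D (-φ) =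
      AffineSubspace.mk' s₀ (D ⊓ LinearMap.ker φ) := by
  ext x
  have hker : φ (x - s₀) = 0 ↔ 0 ≤ φ (x - s₀) ∧ φ (x - s₀) ≤ 0 := by
    rw [and_comm, le_antisymm_iff]
  simp only [halfSubspace, Set.mem_inter_iff, Set.mem_ofPred_eq, LinearMap.neg_apply,
    Left.nonneg_neg_iff, SetLike.mem_coe, AffineSubspace.mem_mk', vsub_eq_sub, Submodule.mem_inf,
    LinearMap.mem_ker, hker]
  tauto

end Module

theorem exists_inf_ker_eq_of_lt_top {K V : Type*} [Field K] [AddCommGroup V] [Module K V]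
    [FiniteDimensional K V] {D : Submodule K V} (hD : D < ⊤) :
    ∃ (D' : Submodule K V) (φ : V →ₗ[K] K) (v : V), v ∈ D' ∧ φ v = 1 ∧
      D' ⊓ LinearMap.ker φ = D ∧ Module.finrank K D' = Module.finrank K D + 1 := by
  obtain ⟨v, -, hv⟩ := SetLike.exists_of_lt hD
  obtain ⟨φ, hφv, hφD⟩ := Submodule.exists_le_ker_of_notMem hv
  have hspan : Submodule.span K {v} ⊓ LinearMap.ker φ = ⊥ := by
    refine (Submodule.eq_bot_iff _).2 ?_
    rintro x ⟨hx, hker⟩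
    obtain ⟨c, rfl⟩ := Submodule.mem_span_singleton.1 hx
    have hc : c * φ v = 0 := by simpa using hker
    rw [(mul_eq_zero_iff_right hφv).1 hc, zero_smul]
  have hdisj : D ⊓ Submodule.span K {v} = ⊥ :=
    eq_bot_iff.2 fun x hx => hspan ▸ ⟨hx.2, hφD hx.1⟩
  refine ⟨D ⊔ Submodule.span K {v}, (φ v)⁻¹ • φ, v,
    Submodule.mem_sup_right (Submodule.mem_span_singleton_self v), inv_mul_cancel₀ hφv, ?_, ?_⟩
  · rw [LinearMap.ker_smul _ _ (inv_ne_zero hφv), sup_inf_assoc_of_le _ hφD, hspan, sup_bot_eq]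
  · have hrank := Submodule.finrank_sup_add_finrank_inf_eq D (Submodule.span K {v})
    rwa [hdisj, finrank_bot, add_zero,
      finrank_span_singleton (by rintro rfl; exact hv (zero_mem D))] at hrank

variable [NormedAddCommGroup E] [NormedSpace ℝ E] [FiniteDimensional ℝ E]

theorem isClosed_halfSubspace (s₀ : E) (D : Submodule ℝ E) (φ : E →ₗ[ℝ] ℝ) :
    IsClosed (halfSubspace s₀ D φ) :=
  (D.closed_of_finiteDimensional.preimage (continuous_sub_right s₀)).inter
    (isClosed_le continuous_const
      (φ.continuous_of_finiteDimensional.comp (continuous_sub_right s₀)))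

theorem exists_isLocalGenerator_mk' (s₀ : E) (k : ℕ) (D : Submodule ℝ E)
    (hD : Module.finrank ℝ D + k = Module.finrank ℝ E) :
    ∃ a : Cochain R E, IsLocalGenerator (AffineSubspace.mk' s₀ D : Set E) k a := by
  induction k generalizing D with
  | zero =>
    obtain rfl : D = ⊤ := Submodule.eq_top_of_finrank_eq hD
    have huniv : (AffineSubspace.mk' s₀ (⊤ : Submodule ℝ E) : Set E) = Set.univ := by
      ext x
      simp
    exact ⟨unitCochain, huniv ▸ isLocalGenerator_univ⟩
  | succ k ih =>
    have hlt : D < ⊤ := Submodule.lt_top_of_finrank_lt_finrank (by omega)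
    obtain ⟨D', φ, v, hv, hφ, rfl, hrank⟩ := exists_inf_ker_eq_of_lt_top hlt
    obtain ⟨a, ha⟩ := ih D' (by omega)
    rw [← halfSubspace_union_neg s₀ D' φ] at ha
    rw [← halfSubspace_inter_neg]
    have hφ' : 0 < (-φ) (-v) := by simp [hφ]
    exact ha.exists_inter (isClosed_halfSubspace _ _ _) (isClosed_halfSubspace _ _ _)
      (isAcyclicOn_relCochains_of_starConvex_compl (sub_notMem_halfSubspace (hφ ▸ one_pos))
        (starConvex_compl_halfSubspace hv (hφ ▸ one_pos)))
      (isAcyclicOn_relCochains_of_starConvex_compl (sub_notMem_halfSubspace hφ')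
        (starConvex_compl_halfSubspace (neg_mem hv) hφ'))

theorem exists_isLocalGenerator_affineSubspace (S : AffineSubspace ℝ E)
    (hS : (S : Set E).Nonempty) :
    ∃ a : Cochain R E,
      IsLocalGenerator (S : Set E) (Module.finrank ℝ E - Module.finrank ℝ S.direction) a := by
  obtain ⟨s₀, hs₀⟩ := hS
  rw [← AffineSubspace.mk'_eq hs₀, AffineSubspace.direction_mk']
  exact exists_isLocalGenerator_mk' s₀ _ _ (Nat.add_sub_of_le (Submodule.finrank_le _))

end HalfSpaces

end LocalGenerators

/-! ### Flag chains -/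

section Flags

section Preorder

variable {R P : Type*} [CommRing R] [Preorder P]

/-- Deletion of a vertex other than the bottom one. -/
def deleteSucc {k : ℕ} (i : Fin (k + 1)) (c : pchains P (k + 2)) : pchains P (k + 1) :=
  ⟨c.1 ∘ i.succ.succAbove, c.2.comp (Fin.strictMono_succAbove _)⟩

theorem deleteSucc_zero {k : ℕ} (i : Fin (k + 1)) (c : pchains P (k + 2)) :
    (deleteSucc i c).1 0 = c.1 0 := by
  simp [deleteSucc]

theorem deleteSucc_last_le {k : ℕ} (i : Fin (k + 1)) (c : pchains P (k + 2)) :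
    (deleteSucc i c).1 (Fin.last k) ≤ c.1 (Fin.last (k + 1)) :=
  c.2.monotone (Fin.le_last _)

theorem deleteSucc_castSucc_last {k : ℕ} (i : Fin (k + 1)) (c : pchains P (k + 3)) :
    (deleteSucc i.castSucc c).1 (Fin.last (k + 1)) = c.1 (Fin.last (k + 2)) := by
  simp only [deleteSucc, Function.comp]
  rw [Fin.succ_castSucc, Fin.succAbove_ne_last_last (Fin.castSucc_ne_last _)]

theorem deleteSucc_last_lt {k : ℕ} (c : pchains P (k + 2)) :
    (deleteSucc (Fin.last k) c).1 (Fin.last k) < c.1 (Fin.last (k + 1)) := by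
  simp only [deleteSucc, Function.comp, Fin.succ_last, Fin.succAbove_last]
  exact c.2 (Fin.castSucc_lt_last _)

theorem deleteSucc_deleteSucc {k : ℕ} (i : Fin (k + 2)) (j : Fin (k + 1)) (c : pchains P (k + 3)) :
    (deleteSucc j (deleteSucc i c)).1 =
      c.1 ∘ Fin.cons 0 (Fin.succ ∘ i.succAbove ∘ j.succAbove) := by
  funext x
  refine Fin.cases ?_ (fun x => ?_) x <;> simp [deleteSucc]

theorem sum_deleteSucc_deleteSucc_eq_zero {M : Type*} [AddCommGroup M] [Module R M] {k : ℕ}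
    (F : pchains P (k + 1) → M) (c : pchains P (k + 3)) :
    ∑ i : Fin (k + 2), (-1 : R) ^ (i : ℕ) • ∑ j : Fin (k + 1), (-1 : R) ^ (j : ℕ) •
      F (deleteSucc j (deleteSucc i c)) = 0 := by
  classical
  rw [← TupleChain.sum_succAbove_comp_succAbove_eq_zero (R := R) k fun f =>
    if h : StrictMono (c.1 ∘ (Fin.cons 0 (Fin.succ ∘ f) : Fin (k + 1) → Fin (k + 3))) then
      F ⟨_, h⟩ else 0]
  refine Finset.sum_congr rfl fun i _ => congrArg _ <| Finset.sum_congr rfl fun j _ => congrArg _ ?_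
  have heq := deleteSucc_deleteSucc i j c
  rw [dif_pos (heq ▸ (deleteSucc j (deleteSucc i c)).2)]
  exact congrArg F (Subtype.ext heq)

variable (P) in
/-- The nonempty chains of `P`, of all lengths. -/
abbrev PosetFlag : Type _ := Σ k : ℕ, pchains P (k + 1)

namespace PosetFlag

/-- The largest element of a chain. -/
def top (b : PosetFlag P) : P := b.2.1 (Fin.last b.1)

/-- The one-element chain. -/
def point (q : P) : PosetFlag P := ⟨0, ⟨fun _ => q, fun i j h => by omega⟩⟩

end PosetFlag

variable (R P) in
/-- The chain complex spanned by the nonempty chains of `P`, whose boundary never deletes the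
smallest element. It is the direct sum over `p` of the relative simplicial chain complexes of
`(K(≥p), K(>p))`. -/
abbrev FlagChain : Type _ := PosetFlag P →₀ R

namespace FlagChain

/-- The boundary of `FlagChain`. -/
noncomputable def bdry : FlagChain R P →ₗ[R] FlagChain R P :=
  Finsupp.linearCombination R fun
    | ⟨0, _⟩ => 0
    | ⟨k + 1, c⟩ => ∑ i : Fin (k + 1), (-1 : R) ^ (i : ℕ) • Finsupp.single ⟨k, deleteSucc i c⟩ 1

theorem bdry_single_zero (c : pchains P 1) :
    bdry (Finsupp.single (⟨0, c⟩ : PosetFlag P) (1 : R)) = 0 := by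
  simp [bdry]

theorem bdry_single_succ (k : ℕ) (c : pchains P (k + 2)) :
    bdry (Finsupp.single (⟨k + 1, c⟩ : PosetFlag P) (1 : R)) =
      ∑ i : Fin (k + 1), (-1 : R) ^ (i : ℕ) • Finsupp.single ⟨k, deleteSucc i c⟩ 1 := by
  simp [bdry]

theorem bdry_bdry (g : FlagChain R P) : bdry (bdry g) = 0 := by
  suffices bdry ∘ₗ bdry = (0 : FlagChain R P →ₗ[R] FlagChain R P) from LinearMap.congr_fun this g
  refine linearMap_ext_single_one ?_
  rintro ⟨k, c⟩
  rw [LinearMap.comp_apply]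
  match k with
  | 0 => simp [bdry_single_zero]
  | 1 => simp [bdry_single_succ, bdry_single_zero]
  | k + 2 =>
    rw [bdry_single_succ, map_sum]
    simp only [map_smul, bdry_single_succ]
    exact sum_deleteSucc_deleteSucc_eq_zero
      (fun c => Finsupp.single (⟨k, c⟩ : PosetFlag P) (1 : R)) c

variable (R) in
/-- The chains spanned by the flags whose largest element lies in `I`. -/
noncomputable def topIn (I : Set P) : Submodule R (FlagChain R P) :=
  Finsupp.supported R R {b | b.top ∈ I}

theorem single_mem_topIn {I : Set P} {b : PosetFlag P} (h : b.top ∈ I) (r : R) :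
    Finsupp.single b r ∈ topIn R I :=
  Finsupp.single_mem_supported R r h

theorem topIn_mono {I J : Set P} (h : I ⊆ J) : topIn R I ≤ topIn R J :=
  Finsupp.supported_mono fun _ hb => h hb

theorem topIn_inter (I J : Set P) : topIn R (I ∩ J) = topIn R I ⊓ topIn R J :=
  Finsupp.supported_inter _ _

theorem exists_eq_add_of_mem_topIn_union {I J : Set P} {g : FlagChain R P}
    (hg : g ∈ topIn R (I ∪ J)) : ∃ g₁ ∈ topIn R I, ∃ g₂ ∈ topIn R J, g = g₁ + g₂ := by
  have hunion : topIn R (I ∪ J) = topIn R I ⊔ topIn R J := Finsupp.supported_union _ _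
  obtain ⟨g₁, h₁, g₂, h₂, h⟩ := Submodule.mem_sup.1 (hunion ▸ hg)
  exact ⟨g₁, h₁, g₂, h₂, h.symm⟩

theorem bdry_mem_topIn {I : Set P} (hI : IsLowerSet I) {g : FlagChain R P} (hg : g ∈ topIn R I) :
    bdry g ∈ topIn R I := by
  refine map_mem_of_mem_supported ?_ hg
  rintro ⟨k, c⟩ hb
  cases k with
  | zero => exact bdry_single_zero (R := R) c ▸ zero_mem _
  | succ k =>
    rw [bdry_single_succ]
    exact sum_mem fun i _ =>
      Submodule.smul_mem _ _ (single_mem_topIn (hI (deleteSucc_last_le i c) hb) _)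

end FlagChain

theorem strictMono_snoc {k : ℕ} (c : pchains P (k + 1)) {q : P} (h : c.1 (Fin.last k) < q) :
    StrictMono (Fin.snoc c.1 q : Fin (k + 2) → P) := by
  rw [Fin.strictMono_iff_lt_succ]
  refine Fin.lastCases ?_ fun i => ?_
  · rwa [Fin.snoc_castSucc, Fin.succ_last, Fin.snoc_last]
  · rw [Fin.snoc_castSucc, Fin.succ_castSucc, Fin.snoc_castSucc]
    exact c.2 Fin.castSucc_lt_succ

/-- The chain obtained by appending a new largest element. -/
def append {k : ℕ} (c : pchains P (k + 1)) (q : P) (h : c.1 (Fin.last k) < q) : pchains P (k + 2) :=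
  ⟨Fin.snoc c.1 q, strictMono_snoc c h⟩

theorem deleteSucc_last_append {k : ℕ} (c : pchains P (k + 1)) (q : P)
    (h : c.1 (Fin.last k) < q) : deleteSucc (Fin.last k) (append c q h) = c := by
  refine Subtype.ext (funext fun x => ?_)
  simp only [deleteSucc, append, Function.comp, Fin.succ_last, Fin.succAbove_last,
    Fin.snoc_castSucc]

theorem deleteSucc_castSucc_append {k : ℕ} (c : pchains P (k + 2)) (q : P)
    (h : c.1 (Fin.last (k + 1)) < q) (i : Fin (k + 1)) :
    deleteSucc i.castSucc (append c q h) =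
      append (deleteSucc i c) q ((deleteSucc_last_le i c).trans_lt h) := by
  refine Subtype.ext (funext fun x => Fin.lastCases ?_ (fun x => ?_) x)
  · simp only [deleteSucc, append, Function.comp, Fin.snoc_last, Fin.succ_castSucc,
      Fin.succAbove_ne_last_last (Fin.castSucc_ne_last _)]
  · simp only [deleteSucc, append, Function.comp, Fin.snoc_castSucc]
    rw [Fin.succ_castSucc, Fin.castSucc_succAbove_castSucc, Fin.snoc_castSucc]

theorem append_deleteSucc_last {k : ℕ} (c : pchains P (k + 2)) :
    append (deleteSucc (Fin.last k) c) (c.1 (Fin.last (k + 1))) (deleteSucc_last_lt c) = c := by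
  refine Subtype.ext (funext fun x => Fin.lastCases ?_ (fun x => ?_) x) <;>
    simp [deleteSucc, append]

namespace FlagChain

open Classical in
/-- The homotopy contracting `topIn R (Set.Iic q)` onto `PosetFlag.point q`: it appends `q` to the
flags below it. -/
noncomputable def appendHomotopy (q : P) : FlagChain R P →ₗ[R] FlagChain R P :=
  Finsupp.linearCombination R fun b =>
    if h : b.top < q then (-1 : R) ^ b.1 • Finsupp.single ⟨b.1 + 1, append b.2 q h⟩ 1 else 0

theorem appendHomotopy_single_of_lt {q : P} {k : ℕ} {c : pchains P (k + 1)}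
    (h : c.1 (Fin.last k) < q) :
    appendHomotopy q (Finsupp.single (⟨k, c⟩ : PosetFlag P) (1 : R)) =
      (-1 : R) ^ k • Finsupp.single ⟨k + 1, append c q h⟩ 1 := by
  rw [appendHomotopy, Finsupp.linearCombination_single, one_smul]
  exact dif_pos h

theorem appendHomotopy_single_of_not_lt {q : P} {b : PosetFlag P} (h : ¬b.top < q) :
    appendHomotopy q (Finsupp.single b (1 : R)) = 0 := by
  rw [appendHomotopy, Finsupp.linearCombination_single, one_smul, dif_neg h]

theorem appendHomotopy_mem_topIn (q : P) (g : FlagChain R P) :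
    appendHomotopy q g ∈ topIn R (Set.Iic q) := by
  refine map_mem_of_mem_supported (s := Set.univ) (fun b _ => ?_) (by simp [Finsupp.supported_univ])
  by_cases h : b.top < q
  · rw [appendHomotopy_single_of_lt h]
    refine Submodule.smul_mem _ _ (single_mem_topIn (Set.mem_Iic.2 (le_of_eq ?_)) _)
    simp [PosetFlag.top, append]
  · exact appendHomotopy_single_of_not_lt (R := R) h ▸ zero_mem _

theorem bdry_appendHomotopy_single_of_lt {q : P} {k : ℕ} {c : pchains P (k + 1)}
    (h : c.1 (Fin.last k) < q) :
    bdry (appendHomotopy q (Finsupp.single (⟨k, c⟩ : PosetFlag P) (1 : R))) +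
      appendHomotopy q (bdry (Finsupp.single ⟨k, c⟩ 1)) = Finsupp.single ⟨k, c⟩ 1 := by
  have hsign : (-1 : R) ^ k * (-1) ^ k = 1 := by rw [← mul_pow, neg_one_mul, neg_neg, one_pow]
  rw [appendHomotopy_single_of_lt h, map_smul, bdry_single_succ, Fin.sum_univ_castSucc, smul_add,
    deleteSucc_last_append, Fin.val_last, smul_smul, hsign, one_smul, add_right_comm,
    add_eq_right]
  cases k with
  | zero => simp [bdry_single_zero]
  | succ k =>
    rw [bdry_single_succ, map_sum, Finset.smul_sum, ← Finset.sum_add_distrib]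
    refine Finset.sum_eq_zero fun i _ => ?_
    rw [map_smul, appendHomotopy_single_of_lt ((deleteSucc_last_le i c).trans_lt h),
      deleteSucc_castSucc_append, Fin.val_castSucc, smul_smul, smul_smul, ← add_smul, pow_succ,
      mul_neg_one, neg_mul, mul_comm, neg_add_cancel, zero_smul]

theorem appendHomotopy_bdry_single_last {k : ℕ} (c : pchains P (k + 2)) :
    appendHomotopy (c.1 (Fin.last (k + 1)))
        (bdry (Finsupp.single (⟨k + 1, c⟩ : PosetFlag P) (1 : R))) =
      Finsupp.single ⟨k + 1, c⟩ 1 := by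
  have hsign : (-1 : R) ^ k * (-1) ^ k = 1 := by rw [← mul_pow, neg_one_mul, neg_neg, one_pow]
  rw [bdry_single_succ, map_sum, Fin.sum_univ_castSucc, map_smul, Fin.val_last,
    appendHomotopy_single_of_lt (deleteSucc_last_lt c), append_deleteSucc_last, smul_smul, hsign,
    one_smul, add_eq_right]
  refine Finset.sum_eq_zero fun i _ => ?_
  rw [map_smul, appendHomotopy_single_of_not_lt, smul_zero]
  cases k with
  | zero => exact i.elim0
  | succ k => exact (deleteSucc_castSucc_last i c).not_lt

end FlagChain

end Preorder

namespace FlagChain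

variable {R P : Type*} [CommRing R] [PartialOrder P]

theorem bdry_appendHomotopy_single_add {q : P} {b : PosetFlag P} (hb : b.top ≤ q) :
    bdry (appendHomotopy q (Finsupp.single b (1 : R))) +
        appendHomotopy q (bdry (Finsupp.single b 1)) +
      Finsupp.single b (1 : R) (PosetFlag.point q) • Finsupp.single (PosetFlag.point q) 1 =
        Finsupp.single b 1 := by
  obtain ⟨k, c⟩ := b
  obtain hlt | rfl := hb.lt_or_eq
  · have hne : (⟨k, c⟩ : PosetFlag P) ≠ PosetFlag.point q := by
      intro h
      rw [h] at hlt
      exact lt_irrefl _ hlt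
    rw [Finsupp.single_eq_of_ne' hne, zero_smul, add_zero]
    exact bdry_appendHomotopy_single_of_lt hlt
  · rw [appendHomotopy_single_of_not_lt (lt_irrefl _), map_zero, zero_add]
    cases k with
    | zero =>
      have hpoint : PosetFlag.point (PosetFlag.top ⟨0, c⟩) = ⟨0, c⟩ := by
        refine Sigma.ext rfl (heq_of_eq (Subtype.ext (funext fun x => ?_)))
        exact congrArg c.1 (Subsingleton.elim (α := Fin 1) _ _)
      rw [hpoint, bdry_single_zero]
      simp
    | succ k =>
      have hne : (⟨k + 1, c⟩ : PosetFlag P) ≠ PosetFlag.point (PosetFlag.top ⟨k + 1, c⟩) := fun h =>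
        k.succ_ne_zero (congrArg Sigma.fst h)
      rw [Finsupp.single_eq_of_ne' hne, zero_smul, add_zero]
      exact appendHomotopy_bdry_single_last c

theorem bdry_appendHomotopy_add {q : P} {g : FlagChain R P} (hg : g ∈ topIn R (Set.Iic q)) :
    bdry (appendHomotopy q g) + appendHomotopy q (bdry g) +
      g (PosetFlag.point q) • Finsupp.single (PosetFlag.point q) 1 = g := by
  have hzero := map_mem_of_mem_supported (N := ⊥) (f := bdry ∘ₗ appendHomotopy q +
    appendHomotopy q ∘ₗ bdry +
      (Finsupp.lapply (PosetFlag.point q)).smulRight (Finsupp.single (PosetFlag.point q) (1 : R)) -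
        LinearMap.id)
    (fun b hb => (Submodule.mem_bot R).2 (sub_eq_zero.2 (bdry_appendHomotopy_single_add hb))) hg
  exact sub_eq_zero.1 ((Submodule.mem_bot R).1 hzero)

end FlagChain

end Flags

/-! ### The comparison map -/

/-- A family of closed subsets of `E` in which the intersection of two members is covered by
smaller members, such that the singular cohomology of `E` relative to the complement of each member
is free of rank one, concentrated in the degree `codim`. The generating cocycles are part of the
data. -/
structure Arrangement (R P E : Type*) [CommRing R] [PartialOrder P] [TopologicalSpace E] where
  carrier : P → Set E
  codim : P → ℕ
  gen : P → Cochain R E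
  isClosed_carrier : ∀ p, IsClosed (carrier p)
  monotone_carrier : Monotone carrier
  strictAnti_codim : StrictAnti codim
  exists_le_of_mem_of_mem : ∀ p q x, x ∈ carrier p → x ∈ carrier q → ∃ r ≤ p, r ≤ q ∧ x ∈ carrier r
  isLocalGenerator : ∀ p, IsLocalGenerator (carrier p) (codim p) (gen p)

namespace Arrangement

variable {R P E : Type*} [CommRing R] [PartialOrder P] [TopologicalSpace E]
  (A : Arrangement R P E)

theorem codim_last_add_le {k : ℕ} (c : pchains P (k + 1)) :
    A.codim (c.1 (Fin.last k)) + k ≤ A.codim (c.1 0) := by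
  induction k with
  | zero => exact le_rfl
  | succ k ih =>
    have hle := ih (deleteSucc (Fin.last k) c)
    have hlt := A.strictAnti_codim (deleteSucc_last_lt c)
    rw [deleteSucc_zero] at hle
    omega

/-- The alternating sum over the faces of `c` containing its smallest element. -/
noncomputable def faceSum {k : ℕ} (a : pchains P (k + 1) → Cochain R E) (c : pchains P (k + 2)) :
    Cochain R E :=
  ∑ i : Fin (k + 1), (-1 : R) ^ (i : ℕ) • a (deleteSucc i c)

/-- The properties of the values on chains of `k + 1` elements that allow extending a cochain map
from `FlagChain R P` to chains of `k + 2` elements. -/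
structure IsStage (k : ℕ) (a : pchains P (k + 1) → Cochain R E) : Prop where
  mem : ∀ c, a c ∈ relCochains R (A.carrier (c.1 (Fin.last k)))
  homogeneous : ∀ c, degProj (A.codim (c.1 0) - k) (a c) = a c
  cocycle : ∀ c, coboundary (faceSum a c) = 0

variable {A} in
/-- In degree `codim (c 0) - k > codim (c (k + 1))` every relative cocycle is exact. -/
theorem IsStage.exists_coboundary_eq {k : ℕ} {a : pchains P (k + 1) → Cochain R E}
    (ha : A.IsStage k a) (c : pchains P (k + 2)) :
    ∃ b ∈ relCochains R (A.carrier (c.1 (Fin.last (k + 1)))),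
      degProj (A.codim (c.1 0) - (k + 1)) b = b ∧ coboundary b = faceSum a c := by
  set q := c.1 (Fin.last (k + 1))
  have hcodim : A.codim q + (k + 1) ≤ A.codim (c.1 0) := A.codim_last_add_le c
  have hmem : faceSum a c ∈ relCochains R (A.carrier q) := sum_mem fun i _ =>
    Submodule.smul_mem _ _
      (relCochains_mono (A.monotone_carrier (deleteSucc_last_le i c)) (ha.mem _))
  have hhom : degProj (A.codim (c.1 0) - k) (faceSum a c) = faceSum a c := by
    rw [faceSum, map_sum]
    refine Finset.sum_congr rfl fun i _ => ?_
    rw [map_smul, ← deleteSucc_zero i c, ha.homogeneous]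
  have hgen : degProj (A.codim (c.1 0) - k) (A.gen q) = 0 := by
    rw [← (A.isLocalGenerator q).homogeneous, degProj_degProj, if_neg (by omega)]
  obtain ⟨t, g, hg, hsum⟩ := (A.isLocalGenerator q).generates _ hmem (ha.cocycle c)
  refine ⟨degProj (A.codim (c.1 0) - (k + 1)) g, degProj_mem_relCochains hg _, ?_, ?_⟩
  · rw [degProj_degProj, if_pos rfl]
  · have hdeg : A.codim (c.1 0) - (k + 1) + 1 = A.codim (c.1 0) - k := by omega
    rw [coboundary_degProj, hdeg, ← hhom, hsum, map_add, map_smul, hgen, smul_zero, zero_add]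

theorem isStage_gen : A.IsStage 0 fun c => A.gen (c.1 0) where
  mem _ := (A.isLocalGenerator _).mem
  homogeneous _ := (A.isLocalGenerator _).homogeneous
  cocycle c := by simp [faceSum, (A.isLocalGenerator _).cocycle]

variable {A} in
theorem IsStage.exists_succ {k : ℕ} {a : pchains P (k + 1) → Cochain R E} (ha : A.IsStage k a) :
    ∃ b, A.IsStage (k + 1) b ∧ ∀ c, coboundary (b c) = faceSum a c := by
  choose b hmem hhom hb using ha.exists_coboundary_eq
  refine ⟨b, ⟨hmem, hhom, fun c => ?_⟩, hb⟩
  rw [faceSum, map_sum]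
  simp only [map_smul, hb]
  exact sum_deleteSucc_deleteSucc_eq_zero a c

/-- Compatible values on all flags, starting from the local generators. -/
noncomputable def stage : ∀ k, {a : pchains P (k + 1) → Cochain R E // A.IsStage k a}
  | 0 => ⟨_, A.isStage_gen⟩
  | k + 1 => ⟨_, (stage k).2.exists_succ.choose_spec.1⟩

theorem coboundary_stage (k : ℕ) (c : pchains P (k + 2)) :
    coboundary ((A.stage (k + 1)).1 c) = faceSum (A.stage k).1 c :=
  (A.stage k).2.exists_succ.choose_spec.2 c

/-- The cochain map from the flags of `P` to the singular cochains of `E` that sends each point to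
its local generator. -/
noncomputable def comparison : FlagChain R P →ₗ[R] Cochain R E :=
  Finsupp.linearCombination R fun b => (A.stage b.1).1 b.2

theorem comparison_single (b : PosetFlag P) :
    A.comparison (Finsupp.single b 1) = (A.stage b.1).1 b.2 := by
  simp [comparison]

theorem comparison_point (q : P) :
    A.comparison (Finsupp.single (PosetFlag.point q) 1) = A.gen q := by
  rw [comparison_single]
  rfl

theorem comparison_bdry (g : FlagChain R P) :
    A.comparison (FlagChain.bdry g) = coboundary (A.comparison g) := by
  suffices A.comparison ∘ₗ FlagChain.bdry = coboundary ∘ₗ A.comparison from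
    LinearMap.congr_fun this g
  refine linearMap_ext_single_one ?_
  rintro ⟨k, c⟩
  rw [LinearMap.comp_apply, LinearMap.comp_apply, comparison_single]
  cases k with
  | zero =>
    rw [FlagChain.bdry_single_zero, map_zero]
    exact (A.isLocalGenerator _).cocycle.symm
  | succ k =>
    rw [FlagChain.bdry_single_succ, map_sum, coboundary_stage]
    simp only [map_smul, comparison_single, faceSum]

/-- The union of the members indexed by `I`. -/
def union (I : Set P) : Set E := ⋃ p ∈ I, A.carrier p

theorem union_union (I J : Set P) : A.union (I ∪ J) = A.union I ∪ A.union J :=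
  Set.biUnion_union _ _ _

theorem union_inter {I J : Set P} (hI : IsLowerSet I) (hJ : IsLowerSet J) :
    A.union (I ∩ J) = A.union I ∩ A.union J := by
  ext x
  simp only [union, Set.mem_iUnion, Set.mem_inter_iff, exists_prop]
  constructor
  · rintro ⟨p, ⟨hpI, hpJ⟩, hx⟩
    exact ⟨⟨p, hpI, hx⟩, p, hpJ, hx⟩
  · rintro ⟨⟨p, hp, hxp⟩, q, hq, hxq⟩
    obtain ⟨r, hrp, hrq, hxr⟩ := A.exists_le_of_mem_of_mem p q x hxp hxq
    exact ⟨r, ⟨hI hrp hp, hJ hrq hq⟩, hxr⟩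

theorem isClosed_union [Finite P] (I : Set P) : IsClosed (A.union I) :=
  (Set.toFinite I).isClosed_biUnion fun p _ => A.isClosed_carrier p

theorem union_Iic (q : P) : A.union (Set.Iic q) = A.carrier q :=
  Set.Subset.antisymm (Set.iUnion₂_subset fun _ hp => A.monotone_carrier hp)
    (Set.subset_biUnion_of_mem (u := A.carrier) (Set.mem_Iic.2 le_rfl))

theorem comparison_mem_relCochains {I : Set P} {g : FlagChain R P}
    (hg : g ∈ FlagChain.topIn R I) : A.comparison g ∈ relCochains R (A.union I) := by
  refine map_mem_of_mem_supported (fun b hb => ?_) hg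
  rw [comparison_single]
  exact relCochains_mono (Set.subset_biUnion_of_mem (u := A.carrier) hb) ((A.stage b.1).2.mem b.2)

/-- The differential of the mapping cone of `comparison`. -/
noncomputable def coneBdry : FlagChain R P × Cochain R E →ₗ[R] FlagChain R P × Cochain R E :=
  (FlagChain.bdry ∘ₗ LinearMap.fst R _ _).prod
    (A.comparison ∘ₗ LinearMap.fst R _ _ - coboundary ∘ₗ LinearMap.snd R _ _)

theorem coneBdry_apply (x : FlagChain R P × Cochain R E) :
    A.coneBdry x = (FlagChain.bdry x.1, A.comparison x.1 - coboundary x.2) := rfl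

theorem coneBdry_eq_zero_iff {g : FlagChain R P} {c : Cochain R E} :
    A.coneBdry (g, c) = 0 ↔ FlagChain.bdry g = 0 ∧ A.comparison g = coboundary c := by
  rw [coneBdry_apply, Prod.mk_eq_zero, sub_eq_zero]

theorem coneBdry_coneBdry (x : FlagChain R P × Cochain R E) : A.coneBdry (A.coneBdry x) = 0 := by
  simp only [coneBdry_apply, map_sub, FlagChain.bdry_bdry, comparison_bdry, coboundary_coboundary,
    sub_zero, sub_self, Prod.mk_zero_zero]

/-- The part of the mapping cone of `comparison` belonging to the members indexed by `I`. -/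
noncomputable def coneOf (I : Set P) : Submodule R (FlagChain R P × Cochain R E) :=
  (FlagChain.topIn R I).prod (relCochains R (A.union I))

theorem coneBdry_mem_coneOf {I : Set P} (hI : IsLowerSet I) {x : FlagChain R P × Cochain R E}
    (hx : x ∈ A.coneOf I) : A.coneBdry x ∈ A.coneOf I :=
  ⟨FlagChain.bdry_mem_topIn hI hx.1,
    sub_mem (A.comparison_mem_relCochains hx.1) (coboundary_mem_relCochains hx.2)⟩

theorem coneOf_mono {I J : Set P} (h : I ⊆ J) : A.coneOf I ≤ A.coneOf J := fun _ hx =>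
  ⟨FlagChain.topIn_mono h hx.1, relCochains_mono (Set.biUnion_subset_biUnion_left h) hx.2⟩

theorem coneOf_union (I J : Set P) : A.coneOf (I ∪ J) = A.coneOf I ⊔ A.coneOf J := by
  refine le_antisymm ?_
    (sup_le (A.coneOf_mono Set.subset_union_left) (A.coneOf_mono Set.subset_union_right))
  rintro ⟨g, c⟩ ⟨hg, hc⟩
  obtain ⟨g₁, hg₁, g₂, hg₂, rfl⟩ := FlagChain.exists_eq_add_of_mem_topIn_union hg
  obtain ⟨c₁, hc₁, c₂, hc₂, rfl⟩ :=
    exists_eq_add_of_mem_relCochains_union (A.union_union I J ▸ hc)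
  exact Submodule.mem_sup.2 ⟨(g₁, c₁), ⟨hg₁, hc₁⟩, (g₂, c₂), ⟨hg₂, hc₂⟩, rfl⟩

/-- By small simplices, `coneOf (I ∩ J)` is quasi-isomorphic to the intersection of the two
cones. -/
theorem isAcyclicOn_coneOf_inf [Finite P] {I J : Set P} (hI : IsLowerSet I) (hJ : IsLowerSet J)
    (ha : IsAcyclicOn A.coneBdry (A.coneOf (I ∩ J))) :
    IsAcyclicOn A.coneBdry (A.coneOf I ⊓ A.coneOf J) := by
  rintro ⟨g, c⟩ ⟨⟨hgI, hcI⟩, ⟨hgJ, hcJ⟩⟩ hcycle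
  have hg : g ∈ FlagChain.topIn R (I ∩ J) := by
    rw [FlagChain.topIn_inter]
    exact ⟨hgI, hgJ⟩
  have hc := (A.coneBdry_eq_zero_iff.1 hcycle).2
  obtain ⟨w, hwI, hwJ, hw⟩ := exists_sub_coboundary_mem_relCochains_inter (A.isClosed_union I)
    (A.isClosed_union J) hcI hcJ (by
      rw [← hc, ← A.union_inter hI hJ]
      exact A.comparison_mem_relCochains hg)
  rw [← A.union_inter hI hJ] at hw
  have hshift : A.coneBdry (0, -w) = (g, c) - (g, c - coboundary w) := by
    simp [coneBdry_apply]
  obtain ⟨y, hy, hDy⟩ := ha (g, c - coboundary w) ⟨hg, hw⟩ (by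
    rw [← sub_sub_cancel (g, c) (g, c - coboundary w), ← hshift, map_sub, hcycle,
      coneBdry_coneBdry, sub_zero])
  refine ⟨y + (0, -w), add_mem
    ⟨A.coneOf_mono Set.inter_subset_left hy, A.coneOf_mono Set.inter_subset_right hy⟩
    ⟨⟨zero_mem _, neg_mem hwI⟩, ⟨zero_mem _, neg_mem hwJ⟩⟩, ?_⟩
  rw [map_add, hDy, hshift, add_sub_cancel]

theorem isAcyclicOn_coneOf_Iic (q : P) : IsAcyclicOn A.coneBdry (A.coneOf (Set.Iic q)) := by
  rintro ⟨g, c⟩ ⟨hg, hc⟩ hcycle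
  obtain ⟨hbdry, hcomp⟩ := A.coneBdry_eq_zero_iff.1 hcycle
  have hpoint := FlagChain.bdry_appendHomotopy_add hg
  set s := FlagChain.appendHomotopy q g
  have hs : s ∈ FlagChain.topIn R (Set.Iic q) := FlagChain.appendHomotopy_mem_topIn q g
  have hmem : c - A.comparison s ∈ relCochains R (A.carrier q) :=
    A.union_Iic q ▸ sub_mem hc (A.comparison_mem_relCochains hs)
  rw [hbdry, map_zero, add_zero] at hpoint
  have hgen : g (PosetFlag.point q) • A.gen q = coboundary (c - A.comparison s) := by
    rw [map_sub, ← hcomp, ← comparison_bdry, ← map_sub, ← comparison_point,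
      ← map_smul, sub_eq_of_eq_add' hpoint.symm]
  have hzero := (A.isLocalGenerator q).eq_zero _ _ hmem hgen
  rw [hzero, zero_smul] at hgen hpoint
  obtain ⟨t, c', hc', hsum⟩ := (A.isLocalGenerator q).generates _ hmem hgen.symm
  refine ⟨(s + t • Finsupp.single (PosetFlag.point q) 1, -c'), ⟨add_mem hs (Submodule.smul_mem _ _
    (FlagChain.single_mem_topIn (Set.mem_Iic.2 le_rfl) _)), neg_mem (A.union_Iic q ▸ hc')⟩, ?_⟩
  refine Prod.ext ?_ ?_
  · simp only [coneBdry_apply, map_add, map_smul]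
    rw [PosetFlag.point, FlagChain.bdry_single_zero, smul_zero, hpoint]
  · simp only [coneBdry_apply, map_add, map_smul, map_neg, comparison_point, sub_neg_eq_add]
    rw [add_assoc, ← hsum, add_sub_cancel]

theorem isAcyclicOn_coneOf_union [Finite P] {I J : Set P} (hI : IsLowerSet I) (hJ : IsLowerSet J)
    (haI : IsAcyclicOn A.coneBdry (A.coneOf I)) (haJ : IsAcyclicOn A.coneBdry (A.coneOf J))
    (haIJ : IsAcyclicOn A.coneBdry (A.coneOf (I ∩ J))) :
    IsAcyclicOn A.coneBdry (A.coneOf (I ∪ J)) :=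
  A.coneOf_union I J ▸ haI.sup A.coneBdry_coneBdry (fun _ => A.coneBdry_mem_coneOf hI)
    (fun _ => A.coneBdry_mem_coneOf hJ) haJ (A.isAcyclicOn_coneOf_inf hI hJ haIJ)

theorem isAcyclicOn_coneOf_empty : IsAcyclicOn A.coneBdry (A.coneOf ∅) := by
  rintro ⟨g, c⟩ ⟨hg, hc⟩ -
  have hg' : g = 0 := by
    have hmem : g ∈ Finsupp.supported R R (∅ : Set (PosetFlag P)) := hg
    rwa [Finsupp.supported_empty, Submodule.mem_bot] at hmem
  have hc' : c = 0 := funext fun m => funext fun σ => hc m σ fun t ht => by simp [union] at ht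
  exact ⟨0, zero_mem _, by rw [map_zero, hg', hc', Prod.mk_zero_zero]⟩

theorem isAcyclicOn_coneOf [Finite P] {I : Set P} (hI : IsLowerSet I) :
    IsAcyclicOn A.coneBdry (A.coneOf I) := by
  induction hcard : I.ncard using Nat.strong_induction_on generalizing I with
  | _ k ih =>
    obtain rfl | hne := I.eq_empty_or_nonempty
    · exact A.isAcyclicOn_coneOf_empty
    obtain ⟨q, hq⟩ := (Set.toFinite I).exists_maximal hne
    have hlower : IsLowerSet (I \ {q}) := fun a b hba ⟨haI, haq⟩ =>
      ⟨hI hba haI, fun hbq => haq ((hq.2 haI (hbq ▸ hba)).antisymm (hbq ▸ hba))⟩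
    have hlt : (I \ {q}).ncard < k := hcard ▸ Set.ncard_sdiff_singleton_lt_of_mem hq.1
    have hunion : I = Set.Iic q ∪ (I \ {q}) := by
      refine Set.Subset.antisymm (fun x hx => ?_)
        (Set.union_subset (fun x hx => hI hx hq.1) Set.sdiff_subset)
      by_cases h : x = q
      · exact Or.inl (Set.mem_Iic.2 h.le)
      · exact Or.inr ⟨hx, h⟩
    rw [hunion]
    exact A.isAcyclicOn_coneOf_union (isLowerSet_Iic q) hlower (A.isAcyclicOn_coneOf_Iic q)
      (ih _ hlt hlower rfl)
      (ih _ ((Set.ncard_le_ncard Set.inter_subset_right).trans_lt hlt)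
        ((isLowerSet_Iic q).inter hlower) rfl)

theorem comparison_mem_relCochains_iUnion (g : FlagChain R P) :
    A.comparison g ∈ relCochains R (⋃ p, A.carrier p) := by
  have hmem := A.comparison_mem_relCochains (I := Set.univ) (g := g) (by simp [FlagChain.topIn])
  rwa [union, Set.biUnion_univ] at hmem

theorem exists_bdry_eq_and_comparison_add_eq [Finite P] {g : FlagChain R P} {c : Cochain R E}
    (hc : c ∈ relCochains R (⋃ p, A.carrier p)) (hg : FlagChain.bdry g = 0)
    (hgc : A.comparison g = coboundary c) :
    ∃ g', ∃ c' ∈ relCochains R (⋃ p, A.carrier p),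
      g = FlagChain.bdry g' ∧ c = A.comparison g' + coboundary c' := by
  have huniv : A.union Set.univ = ⋃ p, A.carrier p := Set.biUnion_univ _
  obtain ⟨⟨g', c'⟩, ⟨-, hc'⟩, h⟩ := A.isAcyclicOn_coneOf isLowerSet_univ (g, c)
    ⟨by simp [FlagChain.topIn], huniv ▸ hc⟩
    (A.coneBdry_eq_zero_iff.2 ⟨hg, hgc⟩)
  obtain ⟨hgg', hcc'⟩ := Prod.ext_iff.1 h
  refine ⟨g', -c', neg_mem (huniv ▸ hc'), hgg'.symm, ?_⟩
  rw [map_neg, ← sub_eq_add_neg]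
  exact hcc'.symm

end Arrangement

/-! ### Splitting flags by the smallest element -/

section LinkDecomposition

variable {R P : Type*} [CommRing R] [Preorder P]

theorem simpBdry_single (k : ℕ) (c : pchains P (k + 1)) :
    simpBdry R R P k (Finsupp.single c 1) = ∑ i : Fin (k + 1), (-1 : R) ^ (i : ℕ) •
      Finsupp.single ⟨c.1 ∘ i.succAbove, c.2.comp (Fin.strictMono_succAbove i)⟩ 1 := by
  simp [simpBdry]

namespace PosetFlag

/-- The flag with smallest element `p` whose remaining elements form the chain `c`. -/
def prepend (p : P) (k : ℕ) (c : pchains {q // p < q} k) : PosetFlag P :=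
  ⟨k, Fin.cons p fun j => (c.1 j).1, by
    intro i j
    refine Fin.cases ?_ (fun i => ?_) i <;> refine Fin.cases ?_ (fun j => ?_) j
    · exact fun h => absurd h (lt_irrefl _)
    · exact fun _ => by simpa using (c.1 j).2
    · exact fun h => by simp at h
    · exact fun h => by simpa using c.2 (Fin.succ_lt_succ_iff.1 h)⟩

theorem prepend_injective (p : P) (k : ℕ) : Function.Injective (prepend p k) := by
  intro c c' h
  have htuple := congrArg Subtype.val (eq_of_heq (Sigma.mk.inj_iff.1 h).2)
  exact Subtype.ext <| funext fun j => Subtype.ext (by simpa using congrFun htuple j.succ)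

theorem exists_eq_prepend (b : PosetFlag P) : ∃ c, b = prepend (b.2.1 0) b.1 c := by
  obtain ⟨k, c⟩ := b
  refine ⟨⟨fun j => ⟨c.1 j.succ, c.2 (Fin.succ_pos j)⟩,
    fun _ _ h => c.2 (Fin.succ_lt_succ_iff.2 h)⟩, ?_⟩
  refine congrArg (Sigma.mk k) (Subtype.ext (funext fun x => ?_))
  refine Fin.cases ?_ (fun x => ?_) x <;> simp

end PosetFlag

namespace FlagChain

open PosetFlag

theorem linearMap_ext_prepend {M : Type*} [AddCommGroup M] [Module R M]
    {f g : FlagChain R P →ₗ[R] M}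
    (h : ∀ p k c, f (Finsupp.single (prepend p k c) 1) = g (Finsupp.single (prepend p k c) 1)) :
    f = g := by
  refine linearMap_ext_single_one fun b => ?_
  obtain ⟨c, hc⟩ := exists_eq_prepend b
  rw [hc]
  exact h _ _ c

/-- The summand of `FlagChain` spanned by the flags of length `k + 1` with smallest element `p`. -/
noncomputable def inclAbove (p : P) (k : ℕ) :
    (pchains {q // p < q} k →₀ R) →ₗ[R] FlagChain R P :=
  Finsupp.lmapDomain R R (prepend p k)

/-- The projection of `FlagChain` to the summand of `inclAbove`. -/
noncomputable def projAbove (p : P) (k : ℕ) :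
    FlagChain R P →ₗ[R] (pchains {q // p < q} k →₀ R) :=
  Finsupp.lcomapDomain (prepend p k) (prepend_injective p k)

theorem inclAbove_single (p : P) (k : ℕ) (c : pchains {q // p < q} k) :
    inclAbove p k (Finsupp.single c (1 : R)) = Finsupp.single (prepend p k c) 1 :=
  Finsupp.mapDomain_single

theorem projAbove_inclAbove (p : P) (k : ℕ) (y : pchains {q // p < q} k →₀ R) :
    projAbove p k (inclAbove p k y) = y :=
  Finsupp.comapDomain_mapDomain _ (prepend_injective p k) y

theorem projAbove_inclAbove_of_ne {p p' : P} {k k' : ℕ} (h : p' ≠ p ∨ k' ≠ k)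
    (y : pchains {q // p < q} k →₀ R) : projAbove p' k' (inclAbove p k y) = 0 := by
  ext c
  refine Finsupp.mapDomain_of_notMem_range _ _ ?_
  rintro ⟨c', hc'⟩
  have hbot := congrArg (fun b : PosetFlag P => b.2.1 0) hc'
  exact h.elim (fun hp => hp hbot.symm) fun hk => hk (congrArg Sigma.fst hc').symm

theorem bdry_inclAbove_zero (p : P) (y : pchains {q // p < q} 0 →₀ R) :
    bdry (inclAbove p 0 y) = 0 := by
  suffices bdry ∘ₗ inclAbove p 0 = (0 : _ →ₗ[R] _) from LinearMap.congr_fun this y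
  refine linearMap_ext_single_one fun c => ?_
  rw [LinearMap.comp_apply, inclAbove_single]
  exact bdry_single_zero _

theorem bdry_inclAbove (p : P) (k : ℕ) (y : pchains {q // p < q} (k + 1) →₀ R) :
    bdry (inclAbove p (k + 1) y) = inclAbove p k (simpBdry R R _ k y) := by
  suffices bdry ∘ₗ inclAbove p (k + 1) = inclAbove p k ∘ₗ simpBdry R R _ k from
    LinearMap.congr_fun this y
  refine linearMap_ext_single_one fun c => ?_
  rw [LinearMap.comp_apply, LinearMap.comp_apply, inclAbove_single, simpBdry_single, map_sum]
  refine (bdry_single_succ k (prepend p (k + 1) c).2).trans (Finset.sum_congr rfl fun i _ => ?_)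
  rw [map_smul, inclAbove_single]
  congr 3
  refine Subtype.ext (funext fun x => ?_)
  refine Fin.cases ?_ (fun x => ?_) x <;> simp [deleteSucc, prepend, Fin.removeNth]

theorem projAbove_bdry (p : P) (k : ℕ) (g : FlagChain R P) :
    projAbove p k (bdry g) = simpBdry R R _ k (projAbove p (k + 1) g) := by
  suffices projAbove p k ∘ₗ bdry = simpBdry R R _ k ∘ₗ projAbove p (k + 1) from
    LinearMap.congr_fun this g
  refine linearMap_ext_prepend fun p' l c => ?_
  rw [LinearMap.comp_apply, LinearMap.comp_apply, ← inclAbove_single]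
  by_cases h : p = p' ∧ k + 1 = l
  · obtain ⟨rfl, rfl⟩ := h
    rw [bdry_inclAbove, projAbove_inclAbove, projAbove_inclAbove]
  rw [not_and_or] at h
  rw [projAbove_inclAbove_of_ne h, map_zero]
  cases l with
  | zero => rw [bdry_inclAbove_zero, map_zero]
  | succ l =>
    rw [bdry_inclAbove]
    exact projAbove_inclAbove_of_ne (h.imp_right fun hne heq => hne (congrArg (· + 1) heq)) _

theorem bdry_inclAbove_eq_zero (p : P) (k : ℕ) {y : pchains {q // p < q} k →₀ R}
    (hy : y ∈ simpCycles R R _ k) : bdry (inclAbove p k y) = 0 := by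
  cases k with
  | zero => exact bdry_inclAbove_zero p y
  | succ k => rw [bdry_inclAbove, LinearMap.mem_ker.1 hy, map_zero]

theorem projAbove_mem_simpCycles (p : P) (k : ℕ) {g : FlagChain R P} (hg : bdry g = 0) :
    projAbove p k g ∈ simpCycles R R {q // p < q} k := by
  cases k with
  | zero => exact Submodule.mem_top
  | succ k => exact LinearMap.mem_ker.2 (by rw [← projAbove_bdry, hg, map_zero])

end FlagChain

end LinkDecomposition

/-! ### Cohomology of the complement -/

section ComplementCohomology

variable {E : Type*} [TopologicalSpace E]

/-- The cochains of `E` of degree `i` that restrict to cocycles of the complement of `X`. -/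
def complCocycles (R : Type*) [CommRing R] (X : Set E) (i : ℕ) : Submodule R (Cochain R E) where
  carrier := {f | degProj i f = f ∧ coboundary f ∈ relCochains R X}
  zero_mem' := ⟨map_zero _, by rw [map_zero]; exact zero_mem _⟩
  add_mem' hf hg :=
    ⟨by rw [map_add, hf.1, hg.1], by rw [map_add]; exact add_mem hf.2 hg.2⟩
  smul_mem' r f hf :=
    ⟨by rw [map_smul, hf.1], by rw [map_smul]; exact Submodule.smul_mem _ r hf.2⟩

/-- The cochains of `E` that restrict to coboundaries of the complement of `X`. -/
noncomputable def complCoboundaries (R : Type*) [CommRing R] (X : Set E) :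
    Submodule R (Cochain R E) :=
  LinearMap.range coboundary ⊔ relCochains R X

/-- The singular cohomology of the complement of `X` in degree `i`, as a subquotient of the singular
cochains of the whole space `E`. -/
abbrev ComplCohomology (R : Type*) [CommRing R] (X : Set E) (i : ℕ) : Type _ :=
  complCocycles R X i ⧸ (complCoboundaries R X).comap (complCocycles R X i).subtype

variable {R : Type*} [CommRing R] {X : Set E}

theorem mem_complCoboundaries_iff {f : Cochain R E} :
    f ∈ complCoboundaries R X ↔ ∃ g, ∃ c ∈ relCochains R X, f = coboundary g + c := by
  rw [complCoboundaries, Submodule.mem_sup]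
  constructor
  · rintro ⟨_, ⟨g, rfl⟩, c, hc, h⟩
    exact ⟨g, c, hc, h.symm⟩
  · rintro ⟨g, c, hc, rfl⟩
    exact ⟨_, ⟨g, rfl⟩, c, hc, rfl⟩

end ComplementCohomology

/-- The coefficients `t` for which `t • unitCochain` is homogeneous of degree `i`. -/
def constCoeff (R : Type*) [CommRing R] (i : ℕ) : Submodule R R where
  carrier := {t | i ≠ 0 → t = 0}
  zero_mem' _ := rfl
  add_mem' hs ht hi := by rw [hs hi, ht hi, add_zero]
  smul_mem' r t ht hi := by rw [ht hi, smul_zero]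

theorem finrank_constCoeff (R : Type*) [CommRing R] [Nontrivial R] (i : ℕ) :
    Module.finrank R (constCoeff R i) = if i = 0 then 1 else 0 := by
  split_ifs with hi
  · rw [show constCoeff R i = ⊤ from eq_top_iff.2 fun _ _ h => absurd hi h, finrank_top,
      Module.finrank_self]
  · rw [show constCoeff R i = ⊥ from eq_bot_iff.2 fun _ h => h hi, finrank_bot]

namespace Arrangement

variable {R P E : Type*} [CommRing R] [PartialOrder P] [Fintype P]

section Components

variable [TopologicalSpace E] (A : Arrangement R P E) (i : ℕ)

/-- Families of chains of the posets `{q // p < q}`, in the degrees for which the flags with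
smallest element `p` are sent to cochains of degree `i + 1` by `comparison`. -/
abbrev Components : Type _ :=
  ∀ p : {p // i + 1 ≤ A.codim p}, pchains {q // p.1 < q} (A.codim p.1 - i - 1) →₀ R

/-- The flag chain with given components. -/
noncomputable def ofComponents : A.Components i →ₗ[R] FlagChain R P :=
  ∑ p : {p // i + 1 ≤ A.codim p},
    FlagChain.inclAbove p.1 (A.codim p.1 - i - 1) ∘ₗ LinearMap.proj p

/-- The components of a flag chain. -/
noncomputable def toComponents : FlagChain R P →ₗ[R] A.Components i :=
  LinearMap.pi fun p => FlagChain.projAbove p.1 _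

variable {A i}

theorem ofComponents_apply (z : A.Components i) :
    A.ofComponents i z = ∑ p, FlagChain.inclAbove p.1 _ (z p) := by
  simp [ofComponents]

theorem toComponents_ofComponents (z : A.Components i) :
    A.toComponents i (A.ofComponents i z) = z := by
  funext p
  rw [toComponents, LinearMap.pi_apply, ofComponents_apply, map_sum,
    Finset.sum_eq_single_of_mem p (Finset.mem_univ p), FlagChain.projAbove_inclAbove]
  exact fun p' _ hne =>
    FlagChain.projAbove_inclAbove_of_ne (.inl fun heq => hne (Subtype.ext heq.symm)) _

theorem bdry_ofComponents_eq_zero {z : A.Components i}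
    (hz : ∀ p, z p ∈ simpCycles R R {q // p.1 < q} (A.codim p.1 - i - 1)) :
    FlagChain.bdry (A.ofComponents i z) = 0 := by
  rw [ofComponents_apply, map_sum]
  exact Finset.sum_eq_zero fun p _ => FlagChain.bdry_inclAbove_eq_zero _ _ (hz p)

theorem exists_bdry_eq_ofComponents {z : A.Components i}
    (hz : ∀ p, z p ∈ LinearMap.range (simpBdry R R {q // p.1 < q} (A.codim p.1 - i - 1))) :
    ∃ g, FlagChain.bdry g = A.ofComponents i z := by
  choose y hy using hz
  refine ⟨∑ p, FlagChain.inclAbove p.1 _ (y p), ?_⟩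
  rw [ofComponents_apply, map_sum]
  exact Finset.sum_congr rfl fun p _ => by rw [FlagChain.bdry_inclAbove, hy]

theorem mem_range_simpBdry_of_ofComponents_eq_bdry {z : A.Components i} {g : FlagChain R P}
    (h : A.ofComponents i z = FlagChain.bdry g) (p : {p // i + 1 ≤ A.codim p}) :
    z p ∈ LinearMap.range (simpBdry R R {q // p.1 < q} (A.codim p.1 - i - 1)) := by
  refine ⟨FlagChain.projAbove p.1 _ g, ?_⟩
  rw [← FlagChain.projAbove_bdry, ← h]
  exact congrFun (toComponents_ofComponents z) p

variable (A i)

theorem degProj_comparison (g : FlagChain R P) :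
    degProj (i + 1) (A.comparison g) =
      A.comparison (A.ofComponents i (A.toComponents i g)) := by
  suffices degProj (i + 1) ∘ₗ A.comparison =
      A.comparison ∘ₗ A.ofComponents i ∘ₗ A.toComponents i from LinearMap.congr_fun this g
  refine FlagChain.linearMap_ext_prepend fun p k c => ?_
  have hk : A.codim ((PosetFlag.prepend p k c).2.1 (Fin.last k)) + k ≤ A.codim p :=
    A.codim_last_add_le (PosetFlag.prepend p k c).2
  have hhom : degProj (A.codim p - k) (A.comparison (Finsupp.single (PosetFlag.prepend p k c) 1)) =
      A.comparison (Finsupp.single (PosetFlag.prepend p k c) 1) := by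
    rw [comparison_single]
    exact (A.stage k).2.homogeneous (PosetFlag.prepend p k c).2
  rw [LinearMap.comp_apply, LinearMap.comp_apply, LinearMap.comp_apply, ← hhom, degProj_degProj,
    hhom, ofComponents_apply, ← FlagChain.inclAbove_single]
  split_ifs with hdeg
  · have hp : i + 1 ≤ A.codim p := by omega
    obtain rfl : A.codim p - i - 1 = k := by omega
    rw [Finset.sum_eq_single_of_mem (⟨p, hp⟩ : {p // i + 1 ≤ A.codim p}) (Finset.mem_univ _)]
    · rw [toComponents, LinearMap.pi_apply, FlagChain.projAbove_inclAbove]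
    · intro p' _ hne
      rw [toComponents, LinearMap.pi_apply, FlagChain.projAbove_inclAbove_of_ne
        (.inl fun heq => hne (Subtype.ext heq)), map_zero]
  · rw [Finset.sum_eq_zero, map_zero]
    rintro ⟨p', hp'⟩ -
    rw [toComponents, LinearMap.pi_apply, FlagChain.projAbove_inclAbove_of_ne, map_zero]
    refine (eq_or_ne p' p).symm.imp_right ?_
    rintro rfl
    dsimp only
    omega

theorem degProj_comparison_ofComponents (z : A.Components i) :
    degProj (i + 1) (A.comparison (A.ofComponents i z)) = A.comparison (A.ofComponents i z) := by
  rw [degProj_comparison, toComponents_ofComponents]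

end Components

end Arrangement

theorem nonempty_linearEquiv_quotient {R V W M : Type*} [Ring R] [AddCommGroup V] [Module R V]
    [AddCommGroup W] [Module R W] [AddCommGroup M] [Module R M] {N : Submodule R M} {π : V →ₗ[R] W}
    (hπ : Function.Surjective π) (f : V →ₗ[R] M) (hsurj : ∀ y, ∃ x, y - f x ∈ N)
    (hker : ∀ x, f x ∈ N ↔ π x = 0) : Nonempty (W ≃ₗ[R] M ⧸ N) := by
  have hf : Function.Surjective (N.mkQ ∘ₗ f) := by
    refine fun y => Submodule.Quotient.induction_on _ y fun y => ?_
    obtain ⟨x, hx⟩ := hsurj y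
    exact ⟨x, ((Submodule.Quotient.eq _).2 hx).symm⟩
  have hkers : LinearMap.ker π = LinearMap.ker (N.mkQ ∘ₗ f) := by
    ext x
    exact (hker x).symm.trans (Submodule.Quotient.mk_eq_zero _).symm
  exact ⟨(π.quotKerEquivOfSurjective hπ).symm ≪≫ₗ Submodule.quotEquivOfEq _ _ hkers ≪≫ₗ
    (N.mkQ ∘ₗ f).quotKerEquivOfSurjective hf⟩

theorem piMap_mkQ_eq_zero_iff {R ι : Type*} {M : ι → Type*} [Ring R] [∀ i, AddCommGroup (M i)]
    [∀ i, Module R (M i)] {N : ∀ i, Submodule R (M i)} {x : ∀ i, M i} :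
    LinearMap.piMap (fun i => (N i).mkQ) x = 0 ↔ ∀ i, x i ∈ N i :=
  funext_iff.trans (forall_congr' fun _ => Submodule.Quotient.mk_eq_zero _)

namespace Arrangement

section ClassCochain

variable {R P E : Type*} [CommRing R] [PartialOrder P] [Fintype P] [SeminormedAddCommGroup E]
  [NormedSpace ℝ E] (A : Arrangement R P E) (i : ℕ) (x₀ : E)

/-- The cochain of degree `i` with given components and value at `x₀`. Contracting `E` to `x₀`
turns a cocycle of degree `i + 1` relative to the complement into a cocycle of the complement. -/
noncomputable def classCochain : A.Components i × R →ₗ[R] Cochain R E :=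
  (coneHomotopy x₀ ∘ₗ A.comparison ∘ₗ A.ofComponents i).coprod
    (LinearMap.toSpanSingleton R _ unitCochain)

theorem classCochain_apply (z : A.Components i) (t : R) :
    A.classCochain i x₀ (z, t) =
      coneHomotopy x₀ (A.comparison (A.ofComponents i z)) + t • unitCochain :=
  rfl

variable {A i x₀}

theorem coboundary_classCochain {z : A.Components i} (t : R)
    (hz : ∀ p, z p ∈ simpCycles R R {q // p.1 < q} (A.codim p.1 - i - 1)) :
    coboundary (A.classCochain i x₀ (z, t)) = A.comparison (A.ofComponents i z) := by
  have hhtpy := coboundary_coneHomotopy_add x₀ (A.comparison (A.ofComponents i z))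
  rw [← comparison_bdry, bdry_ofComponents_eq_zero hz, map_zero, map_zero, add_zero] at hhtpy
  nth_rw 2 [← degProj_comparison_ofComponents] at hhtpy
  rw [degProj_apply, if_neg i.succ_ne_zero.symm, Pi.zero_apply, zero_smul, add_zero] at hhtpy
  rw [classCochain_apply, map_add, map_smul, coboundary_unitCochain, smul_zero, add_zero, hhtpy]

theorem classCochain_mem_complCocycles {z : A.Components i} {t : R}
    (hz : ∀ p, z p ∈ simpCycles R R {q // p.1 < q} (A.codim p.1 - i - 1))
    (ht : t ∈ constCoeff R i) :
    A.classCochain i x₀ (z, t) ∈ complCocycles R (⋃ p, A.carrier p) i := by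
  have hunit : degProj i (t • unitCochain : Cochain R E) = t • unitCochain := by
    funext m σ
    rw [degProj_apply]
    split_ifs with hm
    · rfl
    · by_cases hi : i = 0
      · simp [unitCochain, show m ≠ 0 by omega]
      · simp [ht hi]
  refine ⟨?_, ?_⟩
  · rw [classCochain_apply, map_add, degProj_coneHomotopy, degProj_comparison_ofComponents, hunit]
  · rw [coboundary_classCochain t hz]
    exact A.comparison_mem_relCochains_iUnion _

variable (x₀) in
theorem exists_sub_classCochain_mem_complCoboundaries {f : Cochain R E}
    (hf : f ∈ complCocycles R (⋃ p, A.carrier p) i) :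
    ∃ z : A.Components i,
      (∀ p, z p ∈ simpCycles R R {q // p.1 < q} (A.codim p.1 - i - 1)) ∧
      ∃ t ∈ constCoeff R i,
        f - A.classCochain i x₀ (z, t) ∈ complCoboundaries R (⋃ p, A.carrier p) := by
  obtain ⟨hhom, hcob⟩ := hf
  obtain ⟨g, c, hc, hg, hgc⟩ := A.exists_bdry_eq_and_comparison_add_eq (g := 0) hcob (map_zero _)
    (by rw [coboundary_coboundary, map_zero])
  set e := f - degProj i c
  have hecob : coboundary e = A.comparison (A.ofComponents i (A.toComponents i g)) := by
    rw [map_sub, ← degProj_comparison, coboundary_degProj, ← hhom, coboundary_degProj, hgc,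
      map_add, add_sub_cancel_right]
  have hhtpy := coboundary_coneHomotopy_add x₀ e
  rw [hecob] at hhtpy
  refine ⟨A.toComponents i g, fun p => FlagChain.projAbove_mem_simpCycles _ _ hg.symm,
    e 0 (ContinuousMap.const _ x₀), fun hi => ?_, mem_complCoboundaries_iff.2
    ⟨coneHomotopy x₀ e, degProj i c, degProj_mem_relCochains hc i, ?_⟩⟩
  · rw [show e = degProj i (f - c) by rw [map_sub, hhom], degProj_apply, if_neg hi.symm]
    rfl
  · rw [classCochain_apply, ← sub_eq_iff_eq_add, sub_right_comm, sub_eq_iff_eq_add, ← add_assoc]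
    exact hhtpy.symm

theorem classCochain_mem_complCoboundaries {z : A.Components i} (hx₀ : x₀ ∉ ⋃ p, A.carrier p)
    (hz : ∀ p, z p ∈ LinearMap.range (simpBdry R R {q // p.1 < q} (A.codim p.1 - i - 1))) :
    A.classCochain i x₀ (z, 0) ∈ complCoboundaries R (⋃ p, A.carrier p) := by
  obtain ⟨g, hg⟩ := exists_bdry_eq_ofComponents hz
  have hmem := A.comparison_mem_relCochains_iUnion g
  have hhtpy := coboundary_coneHomotopy_add_of_mem hx₀ hmem
  rw [← comparison_bdry, hg] at hhtpy
  refine mem_complCoboundaries_iff.2 ⟨-coneHomotopy x₀ (A.comparison g), _, hmem, ?_⟩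
  rw [classCochain_apply, zero_smul, add_zero, map_neg, eq_neg_add_iff_add_eq]
  exact hhtpy

theorem classCochain_const (hx₀ : x₀ ∉ ⋃ p, A.carrier p) (z : A.Components i) (t : R) :
    A.classCochain i x₀ (z, t) 0 (ContinuousMap.const _ x₀) = t := by
  have hcone : coneHomotopy x₀ (A.comparison (A.ofComponents i z)) 0 (ContinuousMap.const _ x₀) =
      0 := by
    refine A.comparison_mem_relCochains_iUnion _ _ _ fun s => ?_
    rwa [coneSimplex_apply, ContinuousMap.const_apply, ← add_smul, add_sub_cancel, one_smul]
  simp [classCochain_apply, hcone, unitCochain]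

theorem of_classCochain_mem_complCoboundaries {z : A.Components i} {t : R}
    (hx₀ : x₀ ∉ ⋃ p, A.carrier p)
    (hz : ∀ p, z p ∈ simpCycles R R {q // p.1 < q} (A.codim p.1 - i - 1))
    (h : A.classCochain i x₀ (z, t) ∈ complCoboundaries R (⋃ p, A.carrier p)) :
    (∀ p, z p ∈ LinearMap.range (simpBdry R R {q // p.1 < q} (A.codim p.1 - i - 1))) ∧ t = 0 := by
  obtain ⟨g, c, hc, heq⟩ := mem_complCoboundaries_iff.1 h
  refine ⟨?_, ?_⟩
  · have hcob := congrArg coboundary heq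
    rw [coboundary_classCochain t hz, map_add, coboundary_coboundary, zero_add] at hcob
    obtain ⟨g', _, _, hg', _⟩ :=
      A.exists_bdry_eq_and_comparison_add_eq hc (bdry_ofComponents_eq_zero hz) hcob
    exact mem_range_simpBdry_of_ofComponents_eq_bdry hg'
  · have hval := congrFun (congrFun heq 0) (ContinuousMap.const _ x₀)
    have hczero : c 0 (ContinuousMap.const _ x₀) = 0 := hc _ _ fun _ => hx₀
    rwa [classCochain_const hx₀, Pi.add_apply, Pi.add_apply, coboundary_zero, hczero,
      add_zero] at hval

variable (A i x₀) in
/-- The cocycles of the complement with given cycles as components. -/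
noncomputable def classCocycle :
    (∀ p : {p // i + 1 ≤ A.codim p}, simpCycles R R {q // p.1 < q} (A.codim p.1 - i - 1)) ×
      constCoeff R i →ₗ[R] complCocycles R (⋃ p, A.carrier p) i :=
  (A.classCochain i x₀ ∘ₗ (LinearMap.piMap fun _ => Submodule.subtype _).prodMap
    (Submodule.subtype _)).codRestrict _ fun v =>
      classCochain_mem_complCocycles (fun p => (v.1 p).2) v.2.2

end ClassCochain

theorem nonempty_linearEquiv_complCohomology {R P E : Type*} [CommRing R] [PartialOrder P]
    [Finite P] [SeminormedAddCommGroup E] [NormedSpace ℝ E] {A : Arrangement R P E} {i : ℕ} {x₀ : E}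
    (hx₀ : x₀ ∉ ⋃ p, A.carrier p) :
    Nonempty (((∀ p : {p // i + 1 ≤ A.codim p},
      simpHomology R R {q // p.1 < q} (A.codim p.1 - i - 1)) × constCoeff R i) ≃ₗ[R]
      ComplCohomology R (⋃ p, A.carrier p) i) := by
  have := Fintype.ofFinite P
  refine nonempty_linearEquiv_quotient
    (π := (LinearMap.piMap fun _ => Submodule.mkQ _).prodMap LinearMap.id)
    ((Function.Surjective.piMap fun _ => Submodule.mkQ_surjective _).prodMap
      Function.surjective_id) (A.classCocycle i x₀) (fun f => ?_) (fun v => ?_)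
  · obtain ⟨z, hz, t, ht, hmem⟩ := exists_sub_classCochain_mem_complCoboundaries x₀ f.2
    exact ⟨(fun p => ⟨z p, hz p⟩, ⟨t, ht⟩), hmem⟩
  · obtain ⟨z, t⟩ := v
    rw [LinearMap.prodMap_apply, Prod.mk_eq_zero, piMap_mkQ_eq_zero_iff]
    constructor
    · intro h
      exact (of_classCochain_mem_complCoboundaries hx₀ (fun p => (z p).2) h).imp_right Subtype.ext
    · rintro ⟨hz, rfl⟩
      exact classCochain_mem_complCoboundaries hx₀ hz

end Arrangement

/-! ### Duality with singular homology -/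

open Opposite

section DualHomology

variable {k : Type*} [Field k]

/-- Over a field the homology of a complex is determined by a presentation of the cocycles of the
dual complex. -/
theorem finrank_homology_eq_finrank_quotient (S : ShortComplex (ModuleCat k)) {V : Type*}
    [AddCommGroup V] [Module k V] {r : V →ₗ[k] Module.Dual k S.X₂}
    (hr : LinearMap.range r = LinearMap.ker S.f.hom.dualMap) :
    Module.finrank k S.homology =
      Module.finrank k (V ⧸ (LinearMap.range S.g.hom.dualMap).comap r) := by
  let K := LinearMap.ker S.g.hom
  let B : Submodule k K := LinearMap.range S.moduleCatToCycles
  let L : V →ₗ[k] Module.Dual k K := K.subtype.dualMap ∘ₗ r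
  have hker : LinearMap.ker L = (LinearMap.range S.g.hom.dualMap).comap r := by
    rw [LinearMap.ker_comp, LinearMap.range_dualMap_eq_dualAnnihilator_ker,
      LinearMap.ker_dualMap_eq_dualAnnihilator_range, Submodule.range_subtype]
  have hrange : LinearMap.range L = B.dualAnnihilator := by
    rw [LinearMap.range_comp, hr]
    ext φ
    rw [← LinearMap.ker_dualMap_eq_dualAnnihilator_range]
    constructor
    · rintro ⟨ψ, hψ, rfl⟩
      exact hψ
    · intro hφ
      obtain ⟨ψ, rfl⟩ := LinearMap.exists_extend φ
      exact ⟨ψ, hφ, rfl⟩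
  calc Module.finrank k S.homology = Module.finrank k (K ⧸ B) :=
        S.moduleCatHomologyIso.toLinearEquiv.finrank_eq
    _ = Module.finrank k (Module.Dual k (K ⧸ B)) := Subspace.dual_finrank_eq.symm
    _ = Module.finrank k B.dualAnnihilator := B.dualQuotEquivDualAnnihilator.finrank_eq
    _ = Module.finrank k (V ⧸ LinearMap.ker L) := by rw [← hrange, L.quotKerEquivRange.finrank_eq]
    _ = _ := by rw [hker]

theorem finrank_homology_chainComplex_eq_finrank_quotient (C : ChainComplex (ModuleCat k) ℕ)
    (i : ℕ) {V : Type*} [AddCommGroup V] [Module k V] {r : V →ₗ[k] Module.Dual k (C.X i)}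
    (hr : LinearMap.range r = LinearMap.ker (C.d (i + 1) i).hom.dualMap) :
    Module.finrank k (C.homology i) =
      Module.finrank k (V ⧸ (LinearMap.range (C.d i (i - 1)).hom.dualMap).comap r) :=
  (ShortComplex.homologyMapIso (C.isoSc' (i + 1) i (i - 1) (by simp)
    (by cases i <;> simp))).toLinearEquiv.finrank_eq.trans
    (finrank_homology_eq_finrank_quotient (C.sc' (i + 1) i (i - 1)) hr)

end DualHomology

section SingularChains

variable {M : Type} [TopologicalSpace M]

/-- The singular simplices of `M` as continuous maps. -/
noncomputable def simplexEquiv (M : Type) [TopologicalSpace M] (i : ℕ) :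
    (TopCat.toSSet.obj (TopCat.of M)).obj (op (SimplexCategory.mk i)) ≃ C(TopSimplex i, M) :=
  TopCat.toSSetObjEquiv (TopCat.of M) (op (SimplexCategory.mk i))

/-- The basis of the singular chains given by the singular simplices. -/
noncomputable def singChainsBasis (M : Type) [TopologicalSpace M] (i : ℕ) :
    Module.Basis C(TopSimplex i, M) ℚ ((singChainsQ (TopCat.of M)).X i) :=
  Module.Basis.reindex (Module.Basis.ofRepr (LinearEquiv.refl ℚ (_ →₀ ℚ))) (simplexEquiv M i)

theorem singChainsBasis_simplexEquiv (i : ℕ)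
    (s : (TopCat.toSSet.obj (TopCat.of M)).obj (op (SimplexCategory.mk i))) :
    singChainsBasis M i (simplexEquiv M i s) = ModuleCat.freeMk s := by
  rw [singChainsBasis, Module.Basis.reindex_apply, Equiv.symm_apply_apply]
  rfl

theorem simplexEquiv_delta (i : ℕ) (j : Fin (i + 2))
    (s : (TopCat.toSSet.obj (TopCat.of M)).obj (op (SimplexCategory.mk (i + 1)))) :
    simplexEquiv M i ((TopCat.toSSet.obj (TopCat.of M)).δ j s) =
      face j (simplexEquiv M (i + 1) s) := by
  ext t
  have hmap : comb (vertices (i + 1) ∘ j.succAbove) t = stdSimplex.map j.succAbove t := by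
    refine ext_coord fun x => ?_
    simp [comb_apply, vertices_apply, stdSimplex.map_coe, FunOnFinite.linearMap_apply_apply,
      Finset.sum_ite, eq_comm]
  rw [face_apply, hmap]
  rfl

theorem objD_hom_apply {k : Type*} [CommRing k] (Y : SimplicialObject (ModuleCat k)) (i : ℕ)
    (x : Y.obj (op (SimplexCategory.mk (i + 1)))) :
    (AlgebraicTopology.AlternatingFaceMapComplex.objD Y i).hom x =
      ∑ j : Fin (i + 2), (-1 : k) ^ (j : ℕ) • (Y.δ j).hom x := by
  rw [AlgebraicTopology.AlternatingFaceMapComplex.objD, ModuleCat.hom_sum, LinearMap.sum_apply]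
  refine Finset.sum_congr rfl fun j _ => ?_
  rw [ModuleCat.hom_zsmul, LinearMap.smul_apply, ← Int.cast_smul_eq_zsmul k]
  push_cast
  rfl

theorem singChainsQ_d_singChainsBasis (i : ℕ) (σ : C(TopSimplex (i + 1), M)) :
    ((singChainsQ (TopCat.of M)).d (i + 1) i).hom (singChainsBasis M (i + 1) σ) =
      ∑ j : Fin (i + 2), (-1 : ℚ) ^ (j : ℕ) • singChainsBasis M i (face j σ) := by
  obtain ⟨s, rfl⟩ := (simplexEquiv M (i + 1)).surjective σ
  have hd : (singChainsQ (TopCat.of M)).d (i + 1) i = _ :=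
    AlgebraicTopology.alternatingFaceMapComplex_obj_d _ i
  rw [hd, singChainsBasis_simplexEquiv]
  refine (objD_hom_apply _ i _).trans (Finset.sum_congr rfl fun j _ => ?_)
  rw [← simplexEquiv_delta, singChainsBasis_simplexEquiv]
  exact congrArg ((-1 : ℚ) ^ (j : ℕ) • ·) (ModuleCat.free_map_apply _ _)

end SingularChains

section Restriction

variable {E : Type} [TopologicalSpace E] (X : Set E)

/-- A singular simplex of the complement of `X`, as a singular simplex of `E`. -/
def inclSimplex {i : ℕ} (σ : C(TopSimplex i, {x // x ∉ X})) : C(TopSimplex i, E) :=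
  (⟨Subtype.val, continuous_subtype_val⟩ : C({x // x ∉ X}, E)).comp σ

theorem inclSimplex_injective (i : ℕ) : Function.Injective (inclSimplex X (i := i)) :=
  fun _ _ h => (ContinuousMap.cancel_left Subtype.val_injective).1 h

theorem face_inclSimplex {i : ℕ} (j : Fin (i + 2)) (σ : C(TopSimplex (i + 1), {x // x ∉ X})) :
    face j (inclSimplex X σ) = inclSimplex X (face j σ) :=
  rfl

/-- The restriction of cochains of degree `i` to the complement of `X`, as functionals on singular
chains. -/
noncomputable def restrict (i : ℕ) :
    Cochain ℚ E →ₗ[ℚ] Module.Dual ℚ ((singChainsQ (TopCat.of {x // x ∉ X})).X i) :=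
  ((singChainsBasis {x // x ∉ X} i).constr ℚ).toLinearMap ∘ₗ
    LinearMap.funLeft ℚ ℚ (inclSimplex X) ∘ₗ LinearMap.proj i

theorem restrict_singChainsBasis (i : ℕ) (f : Cochain ℚ E) (σ : C(TopSimplex i, {x // x ∉ X})) :
    restrict X i f (singChainsBasis {x // x ∉ X} i σ) = f i (inclSimplex X σ) :=
  (singChainsBasis _ i).constr_basis ℚ _ σ

variable {X}

theorem restrict_eq_zero_iff {i : ℕ} {f : Cochain ℚ E} :
    restrict X i f = 0 ↔ degProj i f ∈ relCochains ℚ X := by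
  constructor
  · intro h m σ hσ
    rw [degProj_apply]
    split_ifs with hm
    · subst hm
      exact (restrict_singChainsBasis X m f ⟨fun t => ⟨σ t, hσ t⟩, by fun_prop⟩).symm.trans
        (LinearMap.congr_fun h _)
    · rfl
  · refine fun h => (singChainsBasis _ i).ext fun σ => ?_
    have hval := h i (inclSimplex X σ) fun t => (σ t).2
    rwa [degProj_apply, if_pos rfl, ← restrict_singChainsBasis X i f] at hval

theorem restrict_succ_coboundary (i : ℕ) (f : Cochain ℚ E) :
    restrict X (i + 1) (coboundary f) =
      ((singChainsQ (TopCat.of {x // x ∉ X})).d (i + 1) i).hom.dualMap (restrict X i f) := by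
  refine (singChainsBasis _ (i + 1)).ext fun σ => ?_
  rw [restrict_singChainsBasis, coboundary_succ, LinearMap.dualMap_apply,
    singChainsQ_d_singChainsBasis, map_sum]
  refine Finset.sum_congr rfl fun j _ => ?_
  rw [map_smul, restrict_singChainsBasis, face_inclSimplex, smul_eq_mul]

theorem exists_degProj_eq_and_restrict_eq {i : ℕ}
    (φ : Module.Dual ℚ ((singChainsQ (TopCat.of {x // x ∉ X})).X i)) :
    ∃ f, degProj i f = f ∧ restrict X i f = φ := by
  let g : C(TopSimplex i, E) → ℚ := Function.extend (inclSimplex X) (φ ∘ singChainsBasis _ i) 0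
  refine ⟨(Pi.single i g : Cochain ℚ E), ?_, (singChainsBasis _ i).ext fun σ => ?_⟩
  · funext m
    rw [degProj_apply, ite_eq_left_iff]
    exact fun hm => (Pi.single_eq_of_ne (M := fun m => C(TopSimplex m, E) → ℚ) hm g).symm
  · rw [restrict_singChainsBasis, Pi.single_eq_same]
    exact (inclSimplex_injective X i).extend_apply _ _ σ

theorem degProj_mem_complCoboundaries {f : Cochain ℚ E} (i : ℕ)
    (hf : f ∈ complCoboundaries ℚ X) : degProj i f ∈ complCoboundaries ℚ X := by
  obtain ⟨g, c, hc, rfl⟩ := mem_complCoboundaries_iff.1 hf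
  have hdeg : degProj i (coboundary g) ∈ LinearMap.range coboundary := by
    cases i with
    | zero => exact degProj_zero_coboundary g ▸ zero_mem _
    | succ i => exact ⟨degProj i g, coboundary_degProj i g⟩
  rw [map_add]
  exact add_mem (Submodule.mem_sup_left hdeg)
    (Submodule.mem_sup_right (degProj_mem_relCochains hc i))

theorem range_dualMap_d (i : ℕ) :
    LinearMap.range ((singChainsQ (TopCat.of {x // x ∉ X})).d i (i - 1)).hom.dualMap =
      (LinearMap.range coboundary).map (restrict X i) := by
  rw [← LinearMap.range_comp]
  cases i with
  | zero =>
    rw [HomologicalComplex.shape _ _ _ (by simp)]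
    have hcomp : restrict X 0 ∘ₗ coboundary = 0 := LinearMap.ext fun g =>
      restrict_eq_zero_iff.2 (degProj_zero_coboundary g ▸ zero_mem _)
    rw [hcomp, ModuleCat.hom_zero, LinearMap.range_zero]
    exact LinearMap.range_eq_bot.2 (map_zero _)
  | succ i =>
    have hcomp : restrict X (i + 1) ∘ₗ coboundary =
        ((singChainsQ (TopCat.of {x // x ∉ X})).d (i + 1) i).hom.dualMap ∘ₗ restrict X i :=
      LinearMap.ext (restrict_succ_coboundary i)
    have hsurj : LinearMap.range (restrict X i) = ⊤ := LinearMap.range_eq_top.2 fun φ => by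
      obtain ⟨f, -, hf⟩ := exists_degProj_eq_and_restrict_eq φ
      exact ⟨f, hf⟩
    rw [hcomp, LinearMap.range_comp, hsurj, Submodule.map_top]
    rfl

theorem restrict_mem_range_dualMap_d_iff {i : ℕ} {f : Cochain ℚ E} (hf : degProj i f = f) :
    restrict X i f ∈
        LinearMap.range ((singChainsQ (TopCat.of {x // x ∉ X})).d i (i - 1)).hom.dualMap ↔
      f ∈ complCoboundaries ℚ X := by
  rw [range_dualMap_d]
  constructor
  · rintro ⟨_, ⟨g, rfl⟩, hg⟩
    rw [← sub_eq_zero, ← map_sub, restrict_eq_zero_iff, map_sub, hf] at hg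
    have hsub := degProj_mem_complCoboundaries i
      (Submodule.mem_sup_left (LinearMap.mem_range_self coboundary g) :
        coboundary g ∈ complCoboundaries ℚ X)
    exact (Submodule.sub_mem_iff_right _ hsub).1 (Submodule.mem_sup_right hg)
  · intro h
    obtain ⟨g, c, hc, rfl⟩ := mem_complCoboundaries_iff.1 h
    refine ⟨_, LinearMap.mem_range_self _ g, ?_⟩
    rw [map_add, restrict_eq_zero_iff.2 (degProj_mem_relCochains hc i), add_zero]

variable (X) in
theorem range_restrict_complCocycles (i : ℕ) :
    LinearMap.range (restrict X i ∘ₗ (complCocycles ℚ X i).subtype) =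
      LinearMap.ker ((singChainsQ (TopCat.of {x // x ∉ X})).d (i + 1) i).hom.dualMap := by
  have hiff {f : Cochain ℚ E} (hf : degProj i f = f) :
      coboundary f ∈ relCochains ℚ X ↔ restrict X i f ∈
        LinearMap.ker ((singChainsQ (TopCat.of {x // x ∉ X})).d (i + 1) i).hom.dualMap := by
    rw [LinearMap.mem_ker, ← restrict_succ_coboundary, restrict_eq_zero_iff, ← coboundary_degProj,
      hf]
  ext φ
  constructor
  · rintro ⟨f, rfl⟩
    exact (hiff f.2.1).1 f.2.2
  · intro hφ
    obtain ⟨f, hf, rfl⟩ := exists_degProj_eq_and_restrict_eq φ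
    exact ⟨⟨f, hf, (hiff hf).2 hφ⟩, rfl⟩

variable (X) in
theorem finrank_singHomQ_compl (i : ℕ) :
    Module.finrank ℚ (singHomQ (TopCat.of {x // x ∉ X}) i) =
      Module.finrank ℚ (ComplCohomology ℚ X i) := by
  have hcomap : (LinearMap.range
        ((singChainsQ (TopCat.of {x // x ∉ X})).d i (i - 1)).hom.dualMap).comap
        (restrict X i ∘ₗ (complCocycles ℚ X i).subtype) =
      (complCoboundaries ℚ X).comap (complCocycles ℚ X i).subtype :=
    Submodule.ext fun f => restrict_mem_range_dualMap_d_iff f.2.1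
  rw [singHomQ, finrank_homology_chainComplex_eq_finrank_quotient _ i
    (range_restrict_complCocycles X i), hcomap]

end Restriction

/-! ### Arrangements of affine subspaces -/

namespace Arrangement

theorem finrank_complCohomology {k P E : Type*} [Field k] [PartialOrder P] [Fintype P]
    [SeminormedAddCommGroup E] [NormedSpace ℝ E] (A : Arrangement k P E) (i : ℕ) {x₀ : E}
    (hx₀ : x₀ ∉ ⋃ p, A.carrier p) :
    Module.finrank k (ComplCohomology k (⋃ p, A.carrier p) i) =
      (∑ p : P,
        if i + 1 ≤ A.codim p then
          Module.finrank k (simpHomology k k {q : P // p < q} (A.codim p - i - 1))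
        else 0) +
      (if i = 0 then 1 else 0) := by
  classical
  obtain ⟨e⟩ := nonempty_linearEquiv_complCohomology (i := i) hx₀
  have hfinite (p : {p // i + 1 ≤ A.codim p}) :
      Module.Finite k (simpHomology k k {q // p.1 < q} (A.codim p.1 - i - 1)) :=
    inferInstance
  have hfree (p : {p // i + 1 ≤ A.codim p}) :
      Module.Free k (simpHomology k k {q // p.1 < q} (A.codim p.1 - i - 1)) :=
    inferInstance
  rw [← e.finrank_eq, Module.finrank_prod, Module.finrank_pi_fintype, finrank_constCoeff,
    ← Finset.sum_filter]
  exact congrArg (· + _) (Finset.sum_subtype {p | i + 1 ≤ A.codim p} (by simp)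
    fun p => Module.finrank k (simpHomology k k {q // p < q} (A.codim p - i - 1))).symm

theorem exists_carrier_eq {R P E : Type*} [CommRing R] [PartialOrder P] [NormedAddCommGroup E]
    [NormedSpace ℝ E] [FiniteDimensional ℝ E] {S : P → AffineSubspace ℝ E} (hS : StrictMono S)
    (hne : ∀ p, (S p : Set E).Nonempty)
    (hcover : ∀ p q, ∀ x ∈ S p, x ∈ S q → ∃ r ≤ p, r ≤ q ∧ x ∈ S r) {h : P → ℕ}
    (hh : ∀ p, h p = Module.finrank ℝ E - Module.finrank ℝ (S p).direction) :
    ∃ A : Arrangement R P E, (∀ p, A.carrier p = S p) ∧ A.codim = h := by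
  choose gen hgen using fun p => exists_isLocalGenerator_affineSubspace (R := R) (S p) (hne p)
  refine ⟨{
    carrier := fun p => S p
    codim := h
    gen := gen
    isClosed_carrier := fun p => (S p).closed_of_finiteDimensional
    monotone_carrier := hS.monotone
    strictAnti_codim := fun p q hpq => ?_
    exists_le_of_mem_of_mem := fun p q x hp hq => hcover p q x hp hq
    isLocalGenerator := fun p => hh p ▸ hgen p }, fun _ => rfl, rfl⟩
  have hlt := Submodule.finrank_lt_finrank_of_lt
    (AffineSubspace.direction_lt_of_nonempty (hS hpq) (hne p))
  have hle := Submodule.finrank_le (S q).direction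
  rw [hh, hh]
  omega

end Arrangement

theorem exists_notMem_iUnion_affineSubspace {ι E : Type*} [Countable ι] [NormedAddCommGroup E]
    [NormedSpace ℝ E] [FiniteDimensional ℝ E] {S : ι → AffineSubspace ℝ E} (hS : ∀ i, S i ≠ ⊤) :
    ∃ x, x ∉ ⋃ i, (S i : Set E) := by
  borelize E
  have hnull : MeasureTheory.Measure.addHaar (⋃ i, (S i : Set E)) = 0 :=
    MeasureTheory.measure_iUnion_null fun i =>
      MeasureTheory.Measure.addHaar_affineSubspace _ (S i) (hS i)
  by_contra! h
  rw [Set.eq_univ_of_forall h] at hnull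
  exact (isOpen_univ.measure_pos MeasureTheory.Measure.addHaar Set.univ_nonempty).ne' hnull

/-- `r` is the intersection of all maximal elements above `p` or above `q`. -/
theorem exists_le_of_mem_of_mem_affineSubspace {k V E P : Type*} [Ring k] [AddCommGroup V]
    [Module k V] [AddTorsor V E] [PartialOrder P] [Finite P] {S : P → AffineSubspace k E}
    (horder : ∀ p q : P, p ≤ q ↔ S p ≤ S q) (hproper : ∀ p, S p ≠ ⊤)
    (hclosed : ∀ T : Finset P, T.Nonempty → (∀ p ∈ T, IsMax p) →
      ((sInf (S '' ↑T) : AffineSubspace k E) : Set E).Nonempty → ∃ q, S q = sInf (S '' ↑T))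
    (hcomp : ∀ p, S p = sInf (S '' {m | IsMax m ∧ p ≤ m})) (p q : P) (x : E) (hp : x ∈ S p)
    (hq : x ∈ S q) : ∃ r ≤ p, r ≤ q ∧ x ∈ S r := by
  classical
  have := Fintype.ofFinite P
  let T : Finset P := {m | IsMax m ∧ (p ≤ m ∨ q ≤ m)}
  have hpT : {m | IsMax m ∧ p ≤ m} ⊆ ↑T := fun m hm =>
    Finset.mem_coe.2 (Finset.mem_filter.2 ⟨Finset.mem_univ m, hm.1, .inl hm.2⟩)
  have hqT : {m | IsMax m ∧ q ≤ m} ⊆ ↑T := fun m hm =>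
    Finset.mem_coe.2 (Finset.mem_filter.2 ⟨Finset.mem_univ m, hm.1, .inr hm.2⟩)
  have hT : T.Nonempty := by
    by_contra! hempty
    refine hproper p ?_
    rw [hcomp p, Set.subset_empty_iff.1 (hpT.trans_eq (by rw [hempty, Finset.coe_empty])),
      Set.image_empty, sInf_empty]
  have hx : x ∈ (sInf (S '' ↑T) : AffineSubspace k E) := by
    rw [AffineSubspace.mem_sInf_iff]
    rintro _ ⟨m, hm, rfl⟩
    exact (Finset.mem_filter.1 hm).2.2.elim (fun h => (horder p m).1 h hp)
      fun h => (horder q m).1 h hq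
  obtain ⟨r, hr⟩ := hclosed T hT (fun m hm => (Finset.mem_filter.1 hm).2.1) ⟨x, hx⟩
  refine ⟨r, ?_, ?_, hr ▸ hx⟩
  · rw [horder, hr, hcomp p]
    exact sInf_le_sInf (Set.image_mono hpT)
  · rw [horder, hr, hcomp q]
    exact sInf_le_sInf (Set.image_mono hqT)

end GoreskyMacPherson

open GoreskyMacPherson in
theorem stmt_18_general {E : Type} [NormedAddCommGroup E] [NormedSpace ℝ E]
    [FiniteDimensional ℝ E] {P : Type*} [PartialOrder P] [Fintype P] {S : P → AffineSubspace ℝ E}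
    (hS : StrictMono S) (hne : ∀ p, (S p : Set E).Nonempty) (hproper : ∀ p, S p ≠ ⊤)
    (hcover : ∀ p q, ∀ x ∈ S p, x ∈ S q → ∃ r ≤ p, r ≤ q ∧ x ∈ S r) {h : P → ℕ}
    (hh : ∀ p, h p = Module.finrank ℝ E - Module.finrank ℝ (S p).direction) (i : ℕ) :
    Module.finrank ℚ (singHomQ (TopCat.of {x : E // x ∉ ⋃ p : P, (S p : Set E)}) i) =
      (∑ p : P,
        if i + 1 ≤ h p then
          Module.finrank ℚ (simpHomology ℚ ℚ {q : P // p < q} (h p - i - 1))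
        else 0) +
      (if i = 0 then 1 else 0) := by
  obtain ⟨x₀, hx₀⟩ := exists_notMem_iUnion_affineSubspace hproper
  obtain ⟨A, hcarrier, rfl⟩ := Arrangement.exists_carrier_eq (R := ℚ) hS hne hcover hh
  rw [finrank_singHomQ_compl, ← Set.iUnion_congr hcarrier]
  exact A.finrank_complCohomology i (Set.iUnion_congr hcarrier ▸ hx₀)

/-- The Goresky–MacPherson formula for a real arrangement: for an arrangement `X ⊆ ℝⁿ` of
affine-linear subspaces with intersection poset `P` (with `S p` the subspace corresponding
to `p` and `h(p)` its codimension),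
`dim_ℚ H̃ᵢ(ℝⁿ \ X; ℚ) = Σ_p dim_ℚ H̃_{h(p)-i-2}(K(>p); ℚ)`.
(Unreduced singular homology is used, whence the correction term `1` in degree `0`; the
summand for `p` vanishes when `h(p) - i - 2 < -1`, and `simpHomology … m` is `H̃_{m-1}`.) -/
theorem stmt_18 (n : ℕ) (P : Type) [PartialOrder P] [Fintype P]
    (S : P → AffineSubspace ℝ (Fin n → ℝ))
    -- `P` is ordered by inclusion of the subspaces, which are nonempty and proper
    (horder : ∀ p q : P, p ≤ q ↔ S p ≤ S q)
    (hne : ∀ p : P, (S p : Set (Fin n → ℝ)).Nonempty)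
    (hproper : ∀ p : P, S p ≠ ⊤)
    -- `P` is closed under nonempty intersections of irreducible components …
    (hclosed : ∀ T : Finset P, T.Nonempty → (∀ p ∈ T, IsMax p) →
      ((sInf (S '' ↑T) : AffineSubspace ℝ (Fin n → ℝ)) : Set (Fin n → ℝ)).Nonempty →
      ∃ q : P, S q = sInf (S '' ↑T))
    -- … and every element is the intersection of the components containing it
    (hcomp : ∀ p : P, S p = sInf (S '' {m : P | IsMax m ∧ p ≤ m}))
    -- `h p` is the codimension of `S p`
    (ht : P → ℕ) (hht : ∀ p : P, ht p = n - Module.finrank ℝ (S p).direction) :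
    ∀ i : ℕ,
      Module.finrank ℚ
        (singHomQ (TopCat.of {x : Fin n → ℝ // x ∉ ⋃ p : P, (S p : Set (Fin n → ℝ))}) i) =
      (∑ p : P,
        if i + 1 ≤ ht p then
          Module.finrank ℚ (simpHomology ℚ ℚ {q : P // p < q} (ht p - i - 1))
        else 0) +
      (if i = 0 then 1 else 0) := by
  exact stmt_18_general (fun p q hpq => lt_of_le_not_ge ((horder p q).1 hpq.le) fun hle =>
    hpq.not_ge ((horder q p).2 hle)) hne hproper
    (GoreskyMacPherson.exists_le_of_mem_of_mem_affineSubspace horder hproper hclosed hcomp)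
    fun p => by rw [hht, Module.finrank_fin_fun]
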